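/- arXiv:1104.4356 — 3 statements merged into one kernel-verified Lean document; each statement's English description precedes it below -/
import Mathlib

section
/- Assume the Riemann Hypothesis. There exists an absolute constant C > 0 such that for all real r, x, c₁ with r > 1, x^{c₁} ≥ 2657, and 1/2 − ln r/(2·ln x) < c₁ ≤ 1/2, there exists ã ∈ [1/(4(1−c₁)²), 1/(4c₁²)] with |N^{MAX}_{r,c₁}(x) − ã·(4x/ln²x)·((1 − 2c₁)·ln x + x^{−(1−2c₁)} − 1)| ≤ C·c₁^{−1}·x^{1 − c₁/2}, where N^{MAX}_{r,c₁}(x) = #{(p,q) : p, q prime, x^{c₁} < p ≤ x^{1−c₁}, x^{c₁} < q ≤ x^{1−c₁}, and x/r < p·q ≤ x}; in particular the main term is independent of r. -/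
/-- Prime-pair count of the maximal `[c₁, 1−c₁]`-balanced notion with tolerance `r`:
ordered pairs of primes `(p,q)` with `x^{c₁} < p, q ≤ x^{1−c₁}` and `x/r < p·q ≤ x`. -/
noncomputable def NMAX (r c₁ x : ℝ) : ℕ :=
  Nat.card {pq : ℕ × ℕ // pq.1.Prime ∧ pq.2.Prime ∧
    x ^ c₁ < (pq.1 : ℝ) ∧ (pq.1 : ℝ) ≤ x ^ (1 - c₁) ∧
    x ^ c₁ < (pq.2 : ℝ) ∧ (pq.2 : ℝ) ≤ x ^ (1 - c₁) ∧
    x / r < (pq.1 : ℝ) * (pq.2 : ℝ) ∧ (pq.1 : ℝ) * (pq.2 : ℝ) ≤ x}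

section Helpers
open Complex MeasureTheory Set Filter Topology Asymptotics


noncomputable def fracF (u : ℝ) : ℂ := if 1 < u then ((Int.fract u : ℝ) : ℂ) else 0

lemma fracF_norm_le (u : ℝ) : ‖fracF u‖ ≤ 1 := by
  unfold fracF
  split_ifs
  · rw [Complex.norm_real, Real.norm_eq_abs, abs_of_nonneg (Int.fract_nonneg u)]
    exact (Int.fract_lt_one u).le
  · simp

lemma fracF_meas : Measurable fracF := by
  unfold fracF
  exact Measurable.ite measurableSet_Ioi (Complex.measurable_ofReal.comp measurable_fract)
    measurable_const

lemma fracF_locInt : LocallyIntegrableOn fracF (Ioi 0) := by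
  have : LocallyIntegrable fracF := by
    refine (locallyIntegrable_const (1:ℝ)).mono fracF_meas.aestronglyMeasurable ?_
    filter_upwards with u using by simpa using fracF_norm_le u
  exact this.locallyIntegrableOn _

lemma fracF_top : fracF =O[atTop] (fun u : ℝ => u ^ (-(0:ℝ))) := by
  refine IsBigO.of_bound 1 ?_
  filter_upwards with u using by simpa using fracF_norm_le u

lemma fracF_bot (b : ℝ) : fracF =O[𝓝[>] 0] (fun u : ℝ => u ^ (-b)) := by
  have : fracF =ᶠ[𝓝[>] 0] (fun _ => 0) := by
    have h1 : ∀ᶠ u : ℝ in 𝓝[>] 0, u < 1 :=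
      nhdsWithin_le_nhds (eventually_lt_nhds (by norm_num))
    filter_upwards [h1] with u hu
    simp [fracF, hu.le]
  exact this.trans_isBigO (isBigO_zero _ _)

lemma mellin_fracF_diff {s : ℂ} (hs : 0 < s.re) : DifferentiableAt ℂ (fun s => mellin fracF (-s)) s := by
  have := mellin_differentiableAt_of_isBigO_rpow (s := -s) (b := -s.re - 1) fracF_locInt fracF_top (by simpa using hs)
    (fracF_bot _) (by simp)
  exact DifferentiableAt.comp (g := mellin fracF) (f := fun s : ℂ => -s) s this differentiableAt_id.neg

lemma mellin_fracF_eq (s : ℂ) : mellin fracF (-s) = ∫ t in Ioi (1:ℝ), (t:ℂ) ^ (-(s+1)) * (Int.fract t : ℝ) := by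
  unfold mellin
  rw [← integral_indicator measurableSet_Ioi, ← integral_indicator measurableSet_Ioi]
  congr 1
  ext t
  by_cases h : 1 < t
  · have h0 : 0 < t := by linarith
    rw [indicator_of_mem (by exact h0), indicator_of_mem (by exact h)]
    simp only [fracF, h, if_true, smul_eq_mul]
    ring_nf
  · simp [indicator, fracF, h]

lemma fract_integrable {s : ℂ} (hs : 0 < s.re) :
    IntegrableOn (fun t : ℝ => (t:ℂ) ^ (-(s+1)) * ((Int.fract t : ℝ):ℂ)) (Ioi 1) := by
  refine Integrable.mul_bdd (c := 1) (integrableOn_Ioi_cpow_of_lt (by simp; linarith) (by norm_num)) ?_ ?_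
  · exact (Complex.measurable_ofReal.comp measurable_fract).aestronglyMeasurable
  · filter_upwards with t
    rw [Complex.norm_real, Real.norm_eq_abs, abs_of_nonneg (Int.fract_nonneg t)]
    exact (Int.fract_lt_one t).le

lemma mellin_fracF_bound {s : ℂ} (hs : 1/2 ≤ s.re) : ‖mellin fracF (-s)‖ ≤ 2 := by
  rw [mellin_fracF_eq]
  have hi : IntegrableOn (fun t : ℝ => t ^ (-(3/2):ℝ)) (Ioi 1) :=
    integrableOn_Ioi_rpow_of_lt (by norm_num) (by norm_num)
  have := norm_integral_le_of_norm_le (f := fun t : ℝ => (t:ℂ) ^ (-(s+1)) * ((Int.fract t : ℝ):ℂ)) hi (by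
    filter_upwards [ae_restrict_mem measurableSet_Ioi] with t ht
    have ht' : (1:ℝ) < t := ht
    rw [norm_mul, norm_cpow_eq_rpow_re_of_pos (by linarith), Complex.norm_real, Real.norm_eq_abs,
      abs_of_nonneg (Int.fract_nonneg t)]
    have h1 := (Int.fract_lt_one t).le
    have h2 : t ^ (-(s+1)).re ≤ t ^ (-(3/2):ℝ) :=
      Real.rpow_le_rpow_of_exponent_le ht'.le (by simp; linarith)
    have h3 : 0 ≤ t ^ (-(s+1)).re := Real.rpow_nonneg (by linarith) _
    nlinarith [Int.fract_nonneg t])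
  refine this.trans ?_
  rw [integral_Ioi_rpow_of_lt (by norm_num) (by norm_num)]
  norm_num

lemma zeta1_formula_gt {s : ℂ} (hs : 1 < s.re) :
    riemannZeta₁ s = s - s * (s - 1) * mellin fracF (-s) := by
  have hs1 : s ≠ 1 := by rintro rfl; simp at hs
  have hs1' : s - 1 ≠ 0 := sub_ne_zero.2 hs1
  have h1 := LSeries_eq_mul_integral (1 : ℕ → ℂ) (r := 1) (by norm_num) hs
    (LSeriesSummable_one_iff.2 hs) (by
      refine IsBigO.of_bound 1 ?_
      filter_upwards with n
      simp)
  rw [LSeries_one_eq_riemannZeta hs] at h1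
  have h2 : ∫ t in Ioi (1:ℝ), (∑ k ∈ Finset.Icc 1 ⌊t⌋₊, (1 : ℕ → ℂ) k) * (t:ℂ) ^ (-(s + 1))
      = (∫ t in Ioi (1:ℝ), (t:ℂ) ^ (-s)) - mellin fracF (-s) := by
    rw [mellin_fracF_eq, ← integral_sub (integrableOn_Ioi_cpow_of_lt (by simpa using hs) (by norm_num))
      (fract_integrable (by linarith))]
    refine setIntegral_congr_fun measurableSet_Ioi fun t ht => ?_
    have ht' : (1:ℝ) < t := ht
    have ht0 : (t:ℂ) ≠ 0 := by exact_mod_cast (by linarith : t ≠ 0)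
    have e1 : (t:ℂ) ^ (-s) = t * (t:ℂ) ^ (-(s+1)) := by
      rw [show -s = 1 + -(s+1) by ring, cpow_add _ _ ht0, cpow_one]
    have e2 : ((Int.fract t : ℝ) : ℂ) = t - (⌊t⌋₊ : ℂ) := by
      have := natCast_floor_eq_intCast_floor (R := ℝ) (a := t) (by linarith)
      rw [Int.fract, ← this]; push_cast; rfl
    simp only [Pi.one_apply, Finset.sum_const, Nat.card_Icc, nsmul_eq_mul]
    rw [e1, e2]; push_cast; simp; ring
  rw [h2, integral_Ioi_cpow_of_lt (by simpa using hs) (by norm_num)] at h1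
  rw [riemannZeta_eq_inv_sub_mul hs1] at h1
  have h3 : riemannZeta₁ s = (s-1) * ((s - 1)⁻¹ * riemannZeta₁ s) := by field_simp
  rw [h3, h1]
  have : -s + 1 ≠ 0 := by intro h; apply hs1'; linear_combination -h
  simp only [ofReal_one, one_cpow]
  have h4 : (-1:ℂ) / (-s+1) = 1 / (s-1) := by
    rw [div_eq_div_iff this hs1']; ring
  rw [h4]
  field_simp

lemma zeta1_formula {s : ℂ} (hs : 0 < s.re) :
    riemannZeta₁ s = s - s * (s - 1) * mellin fracF (-s) := by
  have hopen : IsOpen {z : ℂ | 0 < z.re} := isOpen_lt continuous_const continuous_re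
  have hA : AnalyticOnNhd ℂ riemannZeta₁ {z : ℂ | 0 < z.re} :=
    (differentiable_riemannZeta₁.differentiableOn).analyticOnNhd hopen
  have hB : AnalyticOnNhd ℂ (fun s => s - s * (s - 1) * mellin fracF (-s)) {z : ℂ | 0 < z.re} := by
    refine DifferentiableOn.analyticOnNhd (fun z hz => ?_) hopen
    have := mellin_fracF_diff hz
    exact ((differentiableAt_id).sub ((differentiableAt_id.mul (differentiableAt_id.sub_const 1)).mul this)).differentiableWithinAt
  have hc : IsPreconnected {z : ℂ | 0 < z.re} := (convex_halfSpace_re_gt 0).isPreconnected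
  have := hA.eqOn_of_preconnected_of_eventuallyEq hB hc (z₀ := 2) (by simp) (by
    have : {z : ℂ | 1 < z.re} ∈ 𝓝 (2:ℂ) := (isOpen_lt continuous_const continuous_re).mem_nhds (by simp)
    filter_upwards [this] with z hz using zeta1_formula_gt hz)
  exact this hs

lemma zeta1_bound {s : ℂ} (hs : 1/2 ≤ s.re) : ‖riemannZeta₁ s‖ ≤ 3 * (1 + ‖s‖)^2 := by
  rw [zeta1_formula (by linarith)]
  have h1 := mellin_fracF_bound hs
  have h2 : ‖s - 1‖ ≤ ‖s‖ + 1 := by simpa using norm_sub_le s 1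
  calc _ ≤ ‖s‖ + ‖s‖ * ‖s-1‖ * ‖mellin fracF (-s)‖ := by
        refine (norm_sub_le _ _).trans ?_
        rw [norm_mul, norm_mul]
    _ ≤ ‖s‖ + ‖s‖ * (‖s‖+1) * 2 := by gcongr
    _ ≤ _ := by nlinarith [norm_nonneg s]

lemma zeta1_ne_zero (hRH : RiemannHypothesis) {s : ℂ} (hs : 1/2 < s.re) : riemannZeta₁ s ≠ 0 := by
  by_cases h1 : s = 1
  · subst h1; simp
  · intro h0
    have hz : riemannZeta s = 0 := by rw [riemannZeta_eq_inv_sub_mul h1, h0, mul_zero]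
    have := hRH s hz (by
      rintro ⟨n, rfl⟩
      have h2 : ((-2:ℂ) * (n+1)).re = -2 * (n+1) := by simp
      rw [h2] at hs
      have : (0:ℝ) ≤ n := n.cast_nonneg
      linarith) h1
    linarith

lemma zeta1_two_lower (t : ℝ) : 1/4 ≤ ‖riemannZeta₁ (2 + t * I)‖ := by
  set s : ℂ := 2 + t * I with hs
  have hre : s.re = 2 := by simp [hs]
  have hs1 : s ≠ 1 := by intro h; rw [h] at hre; norm_num at hre
  have hs1' : s - 1 ≠ 0 := sub_ne_zero.2 hs1
  have hZ : riemannZeta₁ s = (s-1) * riemannZeta s := by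
    rw [riemannZeta_eq_inv_sub_mul hs1]; field_simp
  have h1 : 1 ≤ ‖s - 1‖ := by
    have := Complex.re_le_norm (s-1)
    rw [sub_re, hre] at this; norm_num at this; linarith
  have hsum2 : HasSum (fun n : ℕ => (1:ℝ) / ((n:ℝ)+1+1) ^ 2) (Real.pi^2/6 - 1) := by
    have h := hasSum_zeta_two
    have h' := (hasSum_nat_add_iff' 2).2 h
    simp only [Finset.sum_range_succ] at h'
    norm_num at h'
    have e : (fun n : ℕ => (1:ℝ) / ((n:ℝ)+1+1) ^ 2) = fun n : ℕ => (((n:ℝ)+2) ^ 2)⁻¹ := by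
      ext n
      rw [one_div, add_assoc, one_add_one_eq_two]
    rw [e]; exact h'
  have hterm : ∀ n : ℕ, ‖(1:ℂ) / ((n:ℂ)+1+1) ^ s‖ = (1:ℝ) / ((n:ℝ)+1+1) ^ 2 := by
    intro n
    have : ((n:ℂ)+1+1) = (((n:ℝ)+1+1 : ℝ) : ℂ) := by push_cast; ring
    rw [this, norm_div, norm_one, norm_cpow_eq_rpow_re_of_pos (by positivity), hre]
    norm_num
  have hzeta := zeta_eq_tsum_one_div_nat_add_one_cpow (s := s) (by rw [hre]; norm_num)
  have hsm' : Summable (fun n : ℕ => (1:ℂ) / ((n:ℂ)+1+1) ^ s) := by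
    refine Summable.of_norm ?_
    simp_rw [hterm]; exact hsum2.summable
  have hsm : Summable (fun n : ℕ => (1:ℂ) / ((n:ℂ)+1) ^ s) := by
    rw [← summable_nat_add_iff 1]
    simpa using hsm'
  rw [hsm.tsum_eq_zero_add] at hzeta
  have h2 : ‖∑' n : ℕ, (1:ℂ) / (((n+1:ℕ):ℂ)+1) ^ s‖ ≤ Real.pi^2/6 - 1 := by
    rw [← hsum2.tsum_eq]
    refine tsum_of_norm_bounded hsum2.summable.hasSum fun n => ?_
    rw [← hterm]; push_cast; rfl
  have h3 : ‖riemannZeta s‖ ≥ 1 - (Real.pi^2/6 - 1) := by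
    rw [hzeta]
    have := norm_sub_le_norm_add (1:ℂ) (∑' n : ℕ, (1:ℂ) / (((n+1:ℕ):ℂ)+1) ^ s)
    simp only [Nat.cast_zero, zero_add, one_cpow, div_one]
    rw [norm_one] at this
    linarith
  have hpi : Real.pi^2 < 3.15^2 := by
    have := Real.pi_lt_d2; have := Real.pi_pos; gcongr
  rw [hZ, norm_mul]
  nlinarith [norm_nonneg (riemannZeta s)]

lemma logderiv_bound (hRH : RiemannHypothesis) : ∃ A : ℝ, 0 < A ∧ ∀ s : ℂ, 11/20 ≤ s.re → s.re ≤ 2 →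
    ‖deriv riemannZeta₁ s / riemannZeta₁ s‖ ≤ A * (1 + |s.im|) ^ (1/20 : ℝ) := by
  refine ⟨118 * 340 * 40, by norm_num, fun s hs1 hs2 => ?_⟩
  set t := s.im with ht
  set c : ℂ := 2 + t * I with hc
  set w : ℝ := 1 + |t| with hw
  have hw1 : 1 ≤ w := by have := abs_nonneg t; linarith
  have hcn : ‖c‖ ≤ 2 + |t| := by
    refine (norm_add_le _ _).trans ?_
    simp
  have hball : ∀ z ∈ Metric.ball c (3/2), 1/2 < z.re := by
    intro z hz
    rw [Metric.mem_ball, dist_eq_norm] at hz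
    have h1 := Complex.abs_re_le_norm (z - c)
    have h2 : (z - c).re = z.re - 2 := by simp [hc]
    rw [h2] at h1
    have := neg_abs_le (z.re - 2)
    linarith
  have hne : ∀ z ∈ Metric.ball c (3/2), riemannZeta₁ z ≠ 0 := fun z hz => zeta1_ne_zero hRH (hball z hz)
  have hcc : c ∈ Metric.ball c (3/2) := Metric.mem_ball_self (by norm_num)
  have hld : DifferentiableOn ℂ (fun z => deriv riemannZeta₁ z / riemannZeta₁ z) (Metric.ball c (3/2)) := by
    intro z hz
    have := differentiable_riemannZeta₁.deriv z
    exact (this.div (differentiable_riemannZeta₁ z) (hne z hz)).differentiableWithinAt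
  obtain ⟨g, hg0, hg⟩ := hld.isExactOn_ball.with_val_at c 0
  have hconst : ∀ z ∈ Metric.ball c (3/2), riemannZeta₁ z * exp (-g z) = riemannZeta₁ c := by
    intro z hz
    have hd : ∀ y ∈ Metric.ball c (3/2), HasDerivAt (fun z => riemannZeta₁ z * exp (-g z)) 0 y := by
      intro y hy
      have h1 := (differentiable_riemannZeta₁ y).hasDerivAt.mul ((hg y hy).neg.cexp)
      convert! h1 using 1
      have := hne y hy
      field_simp
      ring
    have := Metric.isOpen_ball.is_const_of_deriv_eq_zero (convex_ball c (3/2)).isPreconnected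
      (fun y hy => (hd y hy).differentiableAt.differentiableWithinAt) (fun y hy => (hd y hy).deriv) hz hcc
    simpa [hg0] using this
  set M : ℝ := 340 * w ^ (1/20:ℝ) with hM
  have hwp : 1 ≤ w ^ (1/20:ℝ) := Real.one_le_rpow hw1 (by norm_num)
  have hMpos : 0 < M := by positivity
  have hre : ∀ z ∈ Metric.ball c (3/2), (g z).re ≤ M := by
    intro z hz
    have h1 : ‖riemannZeta₁ z‖ = ‖riemannZeta₁ c‖ * Real.exp (g z).re := by
      rw [← hconst z hz, norm_mul, Complex.norm_exp, mul_assoc, ← Real.exp_add]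
      simp
    have h2 := zeta1_bound (hball z hz).le
    have h3 := zeta1_two_lower t
    have hz' : ‖z‖ ≤ ‖c‖ + 3/2 := by
      rw [Metric.mem_ball, dist_eq_norm] at hz
      have := norm_sub_norm_le z c
      linarith
    have h4 : Real.exp (g z).re ≤ 300 * w^2 := by
      have h5 : (1 + ‖z‖)^2 ≤ (5 * w)^2 := by
        have : 1 + ‖z‖ ≤ 5 * w := by have := abs_nonneg t; linarith
        have := norm_nonneg z
        gcongr
      have := Real.exp_pos (g z).re
      nlinarith
    have h5 : (g z).re ≤ Real.log (300 * w^2) := (Real.le_log_iff_exp_le (by positivity)).2 h4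
    have h6 : Real.log (300 * w^2) = Real.log 300 + 2 * Real.log w := by
      rw [Real.log_mul (by norm_num) (by positivity), Real.log_pow]; norm_num
    have h7 := Real.log_le_rpow_div (x := w) (ε := 1/20) (by linarith) (by norm_num)
    have h8 := Real.log_le_sub_one_of_pos (x := 300) (by norm_num)
    rw [hM]; linarith
  have hBC : ∀ z, ‖z - c‖ ≤ 59/40 → ‖g z‖ ≤ 118 * M := by
    intro z hz
    have hzz : z - c ∈ Metric.ball (0:ℂ) (3/2) := by
      rw [mem_ball_zero_iff]; linarith
    have hmem : ∀ y ∈ Metric.ball (0:ℂ) (3/2), c + y ∈ Metric.ball c (3/2) := by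
      intro y hy; simpa using hy
    have := borelCaratheodory_zero (f := fun y => g (c + y)) hMpos (R := 3/2) (z := z - c) (by
        intro y hy
        have h1 := (hg (c+y) (hmem y hy)).differentiableAt
        exact (DifferentiableAt.comp (g := g) (f := fun y => c + y) y h1 (by fun_prop)).differentiableWithinAt)
      (fun y hy => hre _ (hmem y hy)) (by norm_num) hzz (by simp [hg0])
    simp only [add_sub_cancel] at this
    refine this.trans ?_
    have hn := norm_nonneg (z - c)
    rw [div_le_iff₀ (by linarith)]
    nlinarith
  have hsc : ‖s - c‖ ≤ 29/20 := by
    have : s - c = ((s.re - 2 : ℝ) : ℂ) := by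
      apply Complex.ext <;> simp [hc, ht]
    rw [this, Complex.norm_real, Real.norm_eq_abs, abs_le]
    constructor <;> linarith
  have hsm : s ∈ Metric.ball c (3/2) := by
    rw [Metric.mem_ball, dist_eq_norm]; linarith
  have hder := Complex.norm_deriv_le_of_forall_mem_sphere_norm_le (c := s) (R := 1/40) (C := 118 * M) (f := g)
    (by norm_num) (by
      refine DifferentiableOn.diffContOnCl ?_
      intro z hz
      refine (hg z ?_).differentiableAt.differentiableWithinAt
      have hz' := Metric.closure_ball_subset_closedBall hz
      rw [Metric.mem_closedBall, dist_eq_norm] at hz'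
      rw [Metric.mem_ball, dist_eq_norm]
      have := norm_add_le (z - s) (s - c)
      simp only [sub_add_sub_cancel] at this
      linarith) (by
      intro z hz
      rw [mem_sphere_iff_norm] at hz
      apply hBC
      have := norm_add_le (z - s) (s - c)
      simp only [sub_add_sub_cancel] at this
      linarith)
  rw [(hg s hsm).deriv] at hder
  refine hder.trans (le_of_eq ?_)
  rw [hM]; ring

open ArithmeticFunction in
noncomputable def Pf (u : ℝ) : ℝ := ∑ n ∈ Finset.Icc 1 ⌊u⌋₊, Λ n * (u - n)

open ArithmeticFunction in
noncomputable def Qf (u : ℝ) : ℝ := ∑ n ∈ Finset.Icc 1 ⌊u⌋₊, n * Λ n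

open ArithmeticFunction in
lemma psi_eq_Icc1 (u : ℝ) : Chebyshev.psi u = ∑ n ∈ Finset.Icc 1 ⌊u⌋₊, Λ n := by
  rw [Chebyshev.psi]
  congr 1

lemma Pf_eq (u : ℝ) : Pf u = u * Chebyshev.psi u - Qf u := by
  rw [psi_eq_Icc1, Pf, Qf, Finset.mul_sum, ← Finset.sum_sub_distrib]
  exact Finset.sum_congr rfl fun n _ => by ring

open ArithmeticFunction in
lemma Pf_sub {u v : ℝ} (hu : 0 ≤ u) (huv : u ≤ v) :
    (v - u) * Chebyshev.psi u ≤ Pf v - Pf u ∧ Pf v - Pf u ≤ (v - u) * Chebyshev.psi v := by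
  have hsub : Finset.Icc 1 ⌊u⌋₊ ⊆ Finset.Icc 1 ⌊v⌋₊ := Finset.Icc_subset_Icc_right (Nat.floor_mono huv)
  have h1 : Pf v - Pf u = (v - u) * Chebyshev.psi u +
      ∑ n ∈ Finset.Icc 1 ⌊v⌋₊ \ Finset.Icc 1 ⌊u⌋₊, Λ n * (v - n) := by
    rw [psi_eq_Icc1, Pf, Pf, ← Finset.sum_sdiff hsub, Finset.mul_sum, add_sub_assoc, ← Finset.sum_sub_distrib,
      add_comm]
    congr 1
    exact Finset.sum_congr rfl fun n _ => by ring
  have h2 : Chebyshev.psi v = Chebyshev.psi u + ∑ n ∈ Finset.Icc 1 ⌊v⌋₊ \ Finset.Icc 1 ⌊u⌋₊, Λ n := by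
    rw [psi_eq_Icc1, psi_eq_Icc1, ← Finset.sum_sdiff hsub, add_comm]
  have hn : ∀ n ∈ Finset.Icc 1 ⌊v⌋₊ \ Finset.Icc 1 ⌊u⌋₊, (n:ℝ) ≤ v ∧ u < n := by
    intro n hn
    simp only [Finset.mem_sdiff, Finset.mem_Icc, not_and, not_le] at hn
    refine ⟨(Nat.le_floor_iff (hu.trans huv)).1 hn.1.2, (Nat.floor_lt hu).1 (hn.2 hn.1.1)⟩
  constructor
  · rw [h1]
    have : 0 ≤ ∑ n ∈ Finset.Icc 1 ⌊v⌋₊ \ Finset.Icc 1 ⌊u⌋₊, Λ n * (v - n) :=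
      Finset.sum_nonneg fun n h => mul_nonneg vonMangoldt_nonneg (by linarith [(hn n h).1])
    linarith
  · rw [h1, h2, mul_add, Finset.mul_sum]
    refine add_le_add le_rfl (Finset.sum_le_sum fun n h => ?_)
    rw [mul_comm]
    exact mul_le_mul_of_nonneg_right (by linarith [(hn n h).2]) vonMangoldt_nonneg

lemma Pf_continuousAt {x : ℝ} (hx : 0 < x) : ContinuousAt Pf x := by
  rw [Metric.continuousAt_iff']
  intro ε hε
  set K := Chebyshev.psi (x + 1) with hK
  have hK0 : 0 ≤ K := Chebyshev.psi_nonneg _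
  have h1 : ∀ᶠ y in 𝓝 x, 0 < y := eventually_gt_nhds hx
  have h2 : ∀ᶠ y in 𝓝 x, y < x + 1 := eventually_lt_nhds (by linarith)
  have h3 : ∀ᶠ y in 𝓝 x, dist y x < ε / (K + 1) := Metric.ball_mem_nhds _ (by positivity)
  filter_upwards [h1, h2, h3] with y hy1 hy2 hy3
  have key : |Pf y - Pf x| ≤ |y - x| * K := by
    rcases le_total x y with h | h
    · have := Pf_sub hx.le h
      have h4 := Chebyshev.psi_mono hy2.le
      have h5 := Chebyshev.psi_nonneg x
      rw [abs_of_nonneg (by nlinarith), abs_of_nonneg (by linarith)]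
      nlinarith
    · have := Pf_sub hy1.le h
      have h4 : Chebyshev.psi x ≤ K := Chebyshev.psi_mono (by linarith)
      have h5 := Chebyshev.psi_nonneg y
      rw [abs_sub_comm, abs_sub_comm y, abs_of_nonneg (by nlinarith), abs_of_nonneg (by linarith)]
      nlinarith
  rw [Real.dist_eq] at hy3 ⊢
  rw [lt_div_iff₀ (by positivity)] at hy3
  nlinarith [abs_nonneg (y - x)]

open ArithmeticFunction in
lemma Qf_mono : Monotone Qf := by
  intro u v huv
  unfold Qf
  refine Finset.sum_le_sum_of_subset_of_nonneg (Finset.Icc_subset_Icc_right (Nat.floor_mono huv)) ?_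
  intro n _ _
  exact mul_nonneg n.cast_nonneg vonMangoldt_nonneg

open ArithmeticFunction in
lemma Qf_nonneg (u : ℝ) : 0 ≤ Qf u :=
  Finset.sum_nonneg fun n _ => mul_nonneg n.cast_nonneg vonMangoldt_nonneg

open ArithmeticFunction in
lemma Qf_le {u : ℝ} (hu : 0 ≤ u) : Qf u ≤ u * Chebyshev.psi u := by
  rw [psi_eq_Icc1, Qf, Finset.mul_sum]
  refine Finset.sum_le_sum fun n hn => ?_
  have : (n:ℝ) ≤ u := (Nat.le_floor_iff hu).1 (Finset.mem_Icc.1 hn).2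
  exact mul_le_mul_of_nonneg_right this vonMangoldt_nonneg

noncomputable def gF (u : ℝ) : ℂ := if 1 < u then ((Pf u - (u-1)^2/2 : ℝ) : ℂ) else 0

lemma int_psi {s : ℂ} (hs : 1 < s.re) :
    IntegrableOn (fun t : ℝ => ((Chebyshev.psi t : ℝ) : ℂ) * (t:ℂ) ^ (-(s+1))) (Ioi 1) := by
  have hb : IntegrableOn (fun t : ℝ => (Real.log 4 + 4) * t ^ (-s.re)) (Ioi 1) :=
    (integrableOn_Ioi_rpow_of_lt (by linarith) (by norm_num)).const_mul _
  refine hb.mono' ?_ ?_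
  · refine (AEStronglyMeasurable.mul ?_ ?_)
    · exact (Complex.measurable_ofReal.comp Chebyshev.psi_mono.measurable).aestronglyMeasurable
    · exact ((Complex.measurable_ofReal).pow_const _).aestronglyMeasurable
  · filter_upwards [ae_restrict_mem measurableSet_Ioi] with t ht
    have ht' : (1:ℝ) < t := ht
    have h0 : 0 < t := by linarith
    rw [norm_mul, norm_cpow_eq_rpow_re_of_pos h0, Complex.norm_real, Real.norm_eq_abs,
      abs_of_nonneg (Chebyshev.psi_nonneg t)]
    have h1 := Chebyshev.psi_le_const_mul_self h0.le
    have h2 : t ^ (-s.re) = t * t ^ (-(s+1)).re := by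
      rw [show -s.re = 1 + (-(s+1)).re by simp, Real.rpow_add h0, Real.rpow_one]
    rw [h2, ← mul_assoc]
    exact mul_le_mul_of_nonneg_right h1 (Real.rpow_nonneg h0.le _)

lemma int_Q {s : ℂ} (hs : 1 < s.re) :
    IntegrableOn (fun t : ℝ => ((Qf t : ℝ) : ℂ) * (t:ℂ) ^ (-(s+1+1))) (Ioi 1) := by
  have hb : IntegrableOn (fun t : ℝ => (Real.log 4 + 4) * t ^ (-s.re)) (Ioi 1) :=
    (integrableOn_Ioi_rpow_of_lt (by linarith) (by norm_num)).const_mul _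
  refine hb.mono' ?_ ?_
  · refine (AEStronglyMeasurable.mul ?_ ?_)
    · exact (Complex.measurable_ofReal.comp Qf_mono.measurable).aestronglyMeasurable
    · exact ((Complex.measurable_ofReal).pow_const _).aestronglyMeasurable
  · filter_upwards [ae_restrict_mem measurableSet_Ioi] with t ht
    have ht' : (1:ℝ) < t := ht
    have h0 : 0 < t := by linarith
    rw [norm_mul, norm_cpow_eq_rpow_re_of_pos h0, Complex.norm_real, Real.norm_eq_abs,
      abs_of_nonneg (Qf_nonneg t)]
    have h1 := Chebyshev.psi_le_const_mul_self h0.le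
    have h1' := Qf_le h0.le
    have h2 : t ^ (-s.re) = t * t * t ^ (-(s+1+1)).re := by
      rw [show -s.re = 1 + (1 + (-(s+1+1)).re) by simp, Real.rpow_add h0, Real.rpow_add h0, Real.rpow_one]
      ring
    rw [h2, ← mul_assoc]
    exact mul_le_mul_of_nonneg_right (by nlinarith) (Real.rpow_nonneg h0.le _)

open ArithmeticFunction in
lemma integral_psi {s : ℂ} (hs : 1 < s.re) :
    LSeries (fun n => (Λ n : ℂ)) s = s * ∫ t in Ioi (1:ℝ), ((Chebyshev.psi t : ℝ) : ℂ) * (t:ℂ) ^ (-(s+1)) := by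
  rw [LSeries_eq_mul_integral _ (r := 1) (by norm_num) hs (LSeriesSummable_vonMangoldt hs)]
  · congr 2
    ext t
    rw [psi_eq_Icc1]; push_cast; rfl
  · refine IsBigO.of_bound (Real.log 4 + 4) ?_
    filter_upwards with n
    have h := Chebyshev.psi_le_const_mul_self (x := n) n.cast_nonneg
    have h' := Chebyshev.psi_nonneg n
    rw [psi_eq_Icc1, Nat.floor_natCast] at h h'
    rw [← Complex.ofReal_sum, Complex.norm_real, Real.norm_eq_abs, abs_of_nonneg h']
    simpa using h

open ArithmeticFunction in
lemma integral_Q {s : ℂ} (hs : 1 < s.re) :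
    LSeries (fun n => (Λ n : ℂ)) s = (s+1) * ∫ t in Ioi (1:ℝ), ((Qf t : ℝ) : ℂ) * (t:ℂ) ^ (-(s+1+1)) := by
  have hterm : LSeries.term (fun n => ((n * Λ n : ℝ) : ℂ)) (s+1) = LSeries.term (fun n => (Λ n : ℂ)) s := by
    ext n
    rcases eq_or_ne n 0 with rfl | hn
    · simp
    · rw [LSeries.term_of_ne_zero hn, LSeries.term_of_ne_zero hn]
      have hn' : (n:ℂ) ≠ 0 := by exact_mod_cast hn
      rw [cpow_add _ _ hn', cpow_one]
      push_cast
      field_simp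
  have e1 : LSeries (fun n => (Λ n : ℂ)) s = LSeries (fun n => ((n * Λ n : ℝ) : ℂ)) (s+1) := by
    unfold LSeries; rw [hterm]
  have hsum : LSeriesSummable (fun n => ((n * Λ n : ℝ) : ℂ)) (s+1) := by
    unfold LSeriesSummable; rw [hterm]; exact LSeriesSummable_vonMangoldt hs
  rw [e1, LSeries_eq_mul_integral _ (r := 2) (by norm_num) (by simp; linarith) hsum]
  · congr 2
    ext t
    rw [Qf]; push_cast; rfl
  · refine IsBigO.of_bound (Real.log 4 + 4) ?_
    filter_upwards with n
    have h := Chebyshev.psi_le_const_mul_self (x := n) n.cast_nonneg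
    have h1 := Qf_le (u := n) n.cast_nonneg
    have h' := Qf_nonneg n
    have hQ : ∑ k ∈ Finset.Icc 1 n, (k * Λ k : ℝ) = Qf n := by rw [Qf, Nat.floor_natCast]
    rw [← Complex.ofReal_sum, Complex.norm_real, hQ, Real.norm_eq_abs, abs_of_nonneg h']
    have hn : (0:ℝ) ≤ n := n.cast_nonneg
    rw [Real.norm_eq_abs, abs_of_nonneg (by positivity)]
    norm_num
    nlinarith

lemma integral_poly {s : ℂ} (hs : 1 < s.re) :
    IntegrableOn (fun t : ℝ => (t:ℂ) ^ (-(s+1+1)) * (((t-1)^2/2 : ℝ) : ℂ)) (Ioi 1) ∧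
    ∫ t in Ioi (1:ℝ), (t:ℂ) ^ (-(s+1+1)) * (((t-1)^2/2 : ℝ) : ℂ) = 1 / ((s-1) * (s * (s+1))) := by
  have i0 := integrableOn_Ioi_cpow_of_lt (a := -s) (by simpa using hs) (c := 1) (by norm_num)
  have i1 := integrableOn_Ioi_cpow_of_lt (a := -(s+1)) (by simp; linarith) (c := 1) (by norm_num)
  have i2 := integrableOn_Ioi_cpow_of_lt (a := -(s+1+1)) (by simp; linarith) (c := 1) (by norm_num)
  have v0 := integral_Ioi_cpow_of_lt (a := -s) (by simpa using hs) (c := 1) (by norm_num)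
  have v1 := integral_Ioi_cpow_of_lt (a := -(s+1)) (by simp; linarith) (c := 1) (by norm_num)
  have v2 := integral_Ioi_cpow_of_lt (a := -(s+1+1)) (by simp; linarith) (c := 1) (by norm_num)
  have hE : EqOn (fun t : ℝ => (t:ℂ) ^ (-(s+1+1)) * (((t-1)^2/2 : ℝ) : ℂ))
      (fun t : ℝ => ((1/2:ℂ) * (t:ℂ) ^ (-s) - (t:ℂ) ^ (-(s+1))) + (1/2:ℂ) * (t:ℂ) ^ (-(s+1+1))) (Ioi 1) := by
    intro t ht
    have ht' : (1:ℝ) < t := ht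
    have ht0 : (t:ℂ) ≠ 0 := by exact_mod_cast (by linarith : t ≠ 0)
    have e1 : (t:ℂ) ^ (-s) = t * (t * (t:ℂ) ^ (-(s+1+1))) := by
      rw [show -s = 1 + (1 + -(s+1+1)) by ring, cpow_add _ _ ht0, cpow_add _ _ ht0, cpow_one]
    have e2 : (t:ℂ) ^ (-(s+1)) = (t * (t:ℂ) ^ (-(s+1+1))) := by
      rw [show -(s+1) = (1 + -(s+1+1)) by ring, cpow_add _ _ ht0, cpow_one]
    simp only
    rw [e1, e2]; push_cast; ring
  have j0 := i0.const_mul (1/2:ℂ)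
  have j2 := i2.const_mul (1/2:ℂ)
  have j01 : Integrable (fun t:ℝ => (1/2:ℂ)*(t:ℂ)^(-s) - (t:ℂ)^(-(s+1))) (volume.restrict (Ioi 1)) := j0.sub i1
  refine ⟨(integrableOn_congr_fun hE measurableSet_Ioi).2 ((j0.sub i1).add j2), ?_⟩
  have a0 : s - 1 ≠ 0 := by intro h; have := congrArg re h; simp at this; linarith
  have a1 : s ≠ 0 := by intro h; have := congrArg re h; simp at this; linarith
  have a2 : s + 1 ≠ 0 := by intro h; have := congrArg re h; simp at this; linarith
  rw [setIntegral_congr_fun measurableSet_Ioi hE, integral_add j01 j2, integral_sub j0 i1,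
    integral_const_mul, integral_const_mul, v0, v1, v2]
  simp only [ofReal_one, one_cpow]
  rw [show -s + 1 = -(s-1) by ring, show -(s+1)+1 = -s by ring, show -(s+1+1)+1 = -(s+1) by ring]
  field_simp
  ring

lemma gF_int {s : ℂ} (hs : 1 < s.re) :
    IntegrableOn (fun t : ℝ => (t:ℂ) ^ (-(s+1+1)) * ((Pf t - (t-1)^2/2 : ℝ) : ℂ)) (Ioi 1) ∧
    ∫ t in Ioi (1:ℝ), (t:ℂ) ^ (-(s+1+1)) * ((Pf t - (t-1)^2/2 : ℝ) : ℂ) =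
      -(deriv riemannZeta₁ s / riemannZeta₁ s) / (s * (s+1)) := by
  have hE : EqOn (fun t : ℝ => (t:ℂ) ^ (-(s+1+1)) * ((Pf t - (t-1)^2/2 : ℝ) : ℂ))
      (fun t : ℝ => (((Chebyshev.psi t : ℝ) : ℂ) * (t:ℂ) ^ (-(s+1)) - ((Qf t : ℝ) : ℂ) * (t:ℂ) ^ (-(s+1+1)))
        - (t:ℂ) ^ (-(s+1+1)) * (((t-1)^2/2 : ℝ) : ℂ)) (Ioi 1) := by
    intro t ht
    have ht' : (1:ℝ) < t := ht
    have ht0 : (t:ℂ) ≠ 0 := by exact_mod_cast (by linarith : t ≠ 0)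
    have e2 : (t:ℂ) ^ (-(s+1)) = (t * (t:ℂ) ^ (-(s+1+1))) := by
      rw [show -(s+1) = (1 + -(s+1+1)) by ring, cpow_add _ _ ht0, cpow_one]
    simp only
    rw [e2, Pf_eq]; push_cast; ring
  have i1 := int_psi hs
  have i2 := int_Q hs
  obtain ⟨i3, v3⟩ := integral_poly hs
  have i12 : Integrable (fun t:ℝ => ((Chebyshev.psi t:ℝ):ℂ)*(t:ℂ)^(-(s+1)) - ((Qf t:ℝ):ℂ)*(t:ℂ)^(-(s+1+1))) (volume.restrict (Ioi 1)) := i1.sub i2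
  refine ⟨(integrableOn_congr_fun hE measurableSet_Ioi).2 ((i1.sub i2).sub i3), ?_⟩
  rw [setIntegral_congr_fun measurableSet_Ioi hE, integral_sub i12 i3, integral_sub i1 i2, v3]
  have w1 := integral_psi hs
  have w2 := integral_Q hs
  have a0 : s - 1 ≠ 0 := by intro h; have := congrArg re h; simp at this; linarith
  have a1 : s ≠ 0 := by intro h; have := congrArg re h; simp at this; linarith
  have a2 : s + 1 ≠ 0 := by intro h; have := congrArg re h; simp at this; linarith
  have hs1 : s ≠ 1 := sub_ne_zero.1 a0
  have hL := ArithmeticFunction.LSeries_vonMangoldt_eq_deriv_riemannZeta_div hs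
  have hz := riemannZeta_ne_zero_of_one_lt_re hs
  rw [riemannZeta_eq_inv_sub_mul hs1] at hz
  have hz1 : riemannZeta₁ s ≠ 0 := right_ne_zero_of_mul hz
  rw [deriv_riemannZeta_eq_neg_inv_sub_sq_mul_add hs1, riemannZeta_eq_inv_sub_mul hs1] at hL
  have hL' : LSeries (fun n => (ArithmeticFunction.vonMangoldt n : ℂ)) s =
      1/(s-1) - deriv riemannZeta₁ s / riemannZeta₁ s := by
    rw [hL]; field_simp; ring
  set X := ∫ t in Ioi (1:ℝ), ((Chebyshev.psi t : ℝ) : ℂ) * (t:ℂ) ^ (-(s+1))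
  set Y := ∫ t in Ioi (1:ℝ), ((Qf t : ℝ) : ℂ) * (t:ℂ) ^ (-(s+1+1))
  rw [hL'] at w1 w2
  have hX : X = (1/(s-1) - deriv riemannZeta₁ s / riemannZeta₁ s) / s := by
    rw [w1]; field_simp
  have hY : Y = (1/(s-1) - deriv riemannZeta₁ s / riemannZeta₁ s) / (s+1) := by
    rw [w2]; field_simp
  rw [hX, hY]
  field_simp
  ring

lemma gF_indicator (s : ℂ) : (Ioi (0:ℝ)).indicator (fun t : ℝ => (t:ℂ) ^ (-(s+1) - 1) • gF t) =
    (Ioi (1:ℝ)).indicator (fun t : ℝ => (t:ℂ) ^ (-(s+1+1)) * ((Pf t - (t-1)^2/2 : ℝ) : ℂ)) := by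
  ext t
  by_cases h : 1 < t
  · have h0 : 0 < t := by linarith
    rw [indicator_of_mem (by exact h0), indicator_of_mem (by exact h)]
    simp only [gF, h, if_true, smul_eq_mul]
    congr 2; ring
  · simp [indicator, gF, h]

lemma gF_mellin {s : ℂ} (hs : 1 < s.re) : MellinConvergent gF (-(s+1)) ∧
    mellin gF (-(s+1)) = -(deriv riemannZeta₁ s / riemannZeta₁ s) / (s * (s+1)) := by
  obtain ⟨h1, h2⟩ := gF_int hs
  constructor
  · unfold MellinConvergent
    rw [← integrable_indicator_iff measurableSet_Ioi, gF_indicator, integrable_indicator_iff measurableSet_Ioi]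
    exact h1
  · unfold mellin
    rw [← integral_indicator measurableSet_Ioi, gF_indicator, integral_indicator measurableSet_Ioi, h2]

noncomputable def GG (s : ℂ) : ℂ := -(deriv riemannZeta₁ s / riemannZeta₁ s) / (s * (s+1))

lemma GG_diff (hRH : RiemannHypothesis) {s : ℂ} (hs : 1/2 < s.re) : DifferentiableAt ℂ GG s := by
  have a1 : s ≠ 0 := by intro h; have := congrArg re h; simp at this; linarith
  have a2 : s + 1 ≠ 0 := by intro h; have := congrArg re h; simp at this; linarith
  have h1 := differentiable_riemannZeta₁.deriv s
  have h2 := h1.div (differentiable_riemannZeta₁ s) (zeta1_ne_zero hRH hs)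
  exact h2.neg.div (differentiableAt_id.mul (differentiableAt_id.add_const 1)) (mul_ne_zero a1 a2)

lemma GG_bound (hRH : RiemannHypothesis) : ∃ A : ℝ, 0 < A ∧ ∀ s : ℂ, 11/20 ≤ s.re → s.re ≤ 2 →
    ‖GG s‖ ≤ A * (1 + |s.im|) ^ (-(39/20) : ℝ) := by
  obtain ⟨A, hA, h⟩ := logderiv_bound hRH
  refine ⟨9 * A, by positivity, fun s h1 h2 => ?_⟩
  have hb := h s h1 h2
  have n1 : (1 + |s.im|) / 3 ≤ ‖s‖ := by
    have e1 := Complex.abs_re_le_norm s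
    have e2 := Complex.abs_im_le_norm s
    have := le_abs_self s.re
    linarith
  have n2 : (1 + |s.im|) / 3 ≤ ‖s + 1‖ := by
    have e1 := Complex.abs_re_le_norm (s+1)
    have e2 := Complex.abs_im_le_norm (s+1)
    have := le_abs_self (s+1).re
    simp at e1 e2 this
    linarith
  have hp : 0 < 1 + |s.im| := by positivity
  unfold GG
  rw [norm_div, norm_neg, norm_mul]
  have e : (1 + |s.im|) ^ (-(39/20) : ℝ) = (1 + |s.im|) ^ ((1/20) : ℝ) / (1 + |s.im|)^2 := by
    rw [← Real.rpow_natCast, ← Real.rpow_sub hp]; norm_num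
  calc _ ≤ (A * (1 + |s.im|) ^ (1/20 : ℝ)) / ((1 + |s.im|) / 3 * ((1 + |s.im|) / 3)) := by
        gcongr
    _ = _ := by rw [e]; field_simp; ring

lemma FF_norm {x : ℝ} (hx : 0 < x) (s : ℂ) : ‖(x:ℂ) ^ (s+1) * GG s‖ = x ^ (s.re+1) * ‖GG s‖ := by
  rw [norm_mul, norm_cpow_eq_rpow_re_of_pos hx]; simp

lemma FF_diff (hRH : RiemannHypothesis) {x : ℝ} (hx : 0 < x) {s : ℂ} (hs : 1/2 < s.re) :
    DifferentiableAt ℂ (fun s => (x:ℂ) ^ (s+1) * GG s) s := by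
  refine DifferentiableAt.mul ?_ (GG_diff hRH hs)
  exact (differentiableAt_id.add_const 1).const_cpow (Or.inl (by exact_mod_cast hx.ne'))

lemma GG_cont (hRH : RiemannHypothesis) {σ : ℝ} (h1 : 1/2 < σ) :
    Continuous (fun y : ℝ => GG (σ + y * I)) := by
  rw [continuous_iff_continuousAt]
  intro y
  have := (GG_diff hRH (s := σ + y * I) (by simpa using h1)).continuousAt
  exact ContinuousAt.comp (f := fun y : ℝ => (σ + y * I : ℂ)) this (by fun_prop)

lemma cpow_line_cont {x : ℝ} (hx : 0 < x) (σ : ℝ) :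
    Continuous (fun y : ℝ => (x:ℂ) ^ ((σ + y * I : ℂ)+1)) := by
  refine Continuous.const_cpow (by fun_prop) (Or.inl (by exact_mod_cast hx.ne'))

lemma FF_int (hRH : RiemannHypothesis) {x σ : ℝ} (hx : 0 < x) (h1 : 11/20 ≤ σ) (h2 : σ ≤ 2) :
    Integrable (fun y : ℝ => (x:ℂ) ^ ((σ + y * I : ℂ)+1) * GG (σ + y * I)) := by
  obtain ⟨A, hA, hG⟩ := GG_bound hRH
  have hi : Integrable (fun y : ℝ => (1 + ‖y‖) ^ (-(39/20) : ℝ)) :=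
    integrable_one_add_norm (by simp; norm_num)
  refine (hi.const_mul (x^(σ+1) * A)).mono' ?_ ?_
  · exact ((cpow_line_cont hx σ).mul (GG_cont hRH (by linarith))).aestronglyMeasurable
  · filter_upwards with y
    rw [FF_norm hx]
    have := hG (σ + y * I) (by simpa using h1) (by simpa using h2)
    simp only [add_re, ofReal_re, mul_re, I_re, mul_zero, ofReal_im, I_im, mul_one, sub_self, add_zero,
      add_im, mul_im, zero_add] at this ⊢
    rw [Real.norm_eq_abs, mul_assoc]
    gcongr

lemma horiz (hRH : RiemannHypothesis) {x : ℝ} (hx : 1 < x) {ε : ℝ} (hε : |ε| = 1) :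
    Tendsto (fun T : ℝ => ∫ u : ℝ in (11/20:ℝ)..2, (x:ℂ) ^ ((u + (ε * T : ℝ) * I : ℂ)+1) * GG (u + (ε * T : ℝ) * I))
      atTop (𝓝 0) := by
  obtain ⟨A, hA, hG⟩ := GG_bound hRH
  have hx0 : 0 < x := by linarith
  have hlim : Tendsto (fun T : ℝ => x^(3:ℝ) * (A * (1 + T) ^ (-(39/20) : ℝ)) * |2 - 11/20|) atTop (𝓝 0) := by
    have h1 : Tendsto (fun T : ℝ => (1 + T) ^ (-(39/20) : ℝ)) atTop (𝓝 0) :=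
      (tendsto_rpow_neg_atTop (y := 39/20) (by norm_num)).comp (tendsto_atTop_add_const_left _ 1 tendsto_id)
    have := ((h1.const_mul A).const_mul (x^(3:ℝ))).mul_const |(2 - 11/20 : ℝ)|
    simpa using this
  refine squeeze_zero_norm' ?_ hlim
  filter_upwards [eventually_ge_atTop 0] with T hT
  refine intervalIntegral.norm_integral_le_of_norm_le_const ?_
  intro u hu
  rw [uIoc_of_le (by norm_num)] at hu
  rw [FF_norm hx0]
  have := hG (u + (ε * T : ℝ) * I) (by simpa using hu.1.le) (by simpa using hu.2)
  have him : ((u:ℂ) + (ε * T : ℝ) * I).im = ε * T := by simp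
  have hre : ((u:ℂ) + (ε * T : ℝ) * I).re = u := by simp
  rw [him, abs_mul, hε, one_mul, abs_of_nonneg hT] at this
  rw [hre]
  have h3 : x ^ (u+1) ≤ x ^ (3:ℝ) := Real.rpow_le_rpow_of_exponent_le hx.le (by linarith [hu.2])
  gcongr

lemma shift (hRH : RiemannHypothesis) {x : ℝ} (hx : 1 < x) :
    ∫ y : ℝ, (x:ℂ) ^ (((2:ℝ) + y * I : ℂ)+1) * GG ((2:ℝ) + y * I) =
    ∫ y : ℝ, (x:ℂ) ^ (((11/20:ℝ) + y * I : ℂ)+1) * GG ((11/20:ℝ) + y * I) := by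
  have hx0 : 0 < x := by linarith
  have t1 := intervalIntegral_tendsto_integral (FF_int hRH hx0 (σ := 2) (by norm_num) (by norm_num))
    tendsto_neg_atTop_atBot tendsto_id
  have t2 := intervalIntegral_tendsto_integral (FF_int hRH hx0 (σ := 11/20) (by norm_num) (by norm_num))
    tendsto_neg_atTop_atBot tendsto_id
  have t3 := horiz hRH hx (ε := -1) (by norm_num)
  have t4 := horiz hRH hx (ε := 1) (by norm_num)
  have t := ((t3.sub t4).add (t1.const_smul I)).sub (t2.const_smul I)
  have hz : ∀ T : ℝ, 
     ((∫ u : ℝ in (11/20:ℝ)..2, (x:ℂ) ^ ((u + (-1 * T : ℝ) * I : ℂ)+1) * GG (u + (-1 * T : ℝ) * I)) -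
      (∫ u : ℝ in (11/20:ℝ)..2, (x:ℂ) ^ ((u + (1 * T : ℝ) * I : ℂ)+1) * GG (u + (1 * T : ℝ) * I))) +
      I • (∫ y : ℝ in (-T)..T, (x:ℂ) ^ (((2:ℝ) + y * I : ℂ)+1) * GG ((2:ℝ) + y * I)) -
      I • (∫ y : ℝ in (-T)..T, (x:ℂ) ^ (((11/20:ℝ) + y * I : ℂ)+1) * GG ((11/20:ℝ) + y * I)) = 0 := by
    intro T
    have := Complex.integral_boundary_rect_eq_zero_of_differentiableOn (fun s => (x:ℂ) ^ (s+1) * GG s)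
      ⟨11/20, -T⟩ ⟨2, T⟩ ?_
    · rw [neg_one_mul, one_mul]
      exact this
    · intro s hs
      refine (FF_diff hRH hx0 ?_).differentiableWithinAt
      have h := hs.1
      simp only [mem_preimage] at h
      rw [uIcc_of_le (by norm_num)] at h
      linarith [h.1]
  have t' := t.congr (f₂ := fun _ => 0) (fun T => hz T)
  have := tendsto_nhds_unique t' tendsto_const_nhds
  simp only [sub_zero, zero_add, smul_eq_mul, ← mul_sub] at this
  exact sub_eq_zero.1 ((mul_eq_zero.1 this).resolve_left I_ne_zero)

lemma Pf_formula (hRH : RiemannHypothesis) {x : ℝ} (hx : 1 < x) :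
    ((Pf x - (x-1)^2/2 : ℝ) : ℂ) = (1 / (2 * Real.pi) : ℝ) •
      ∫ y : ℝ, (x:ℂ) ^ (((11/20:ℝ) + y * I : ℂ)+1) * GG ((11/20:ℝ) + y * I) := by
  have hx0 : 0 < x := by linarith
  have hM : ∀ y : ℝ, mellin gF (((-3:ℝ):ℂ) + y * I) = GG ((2:ℝ) + (-y:ℝ) * I) := by
    intro y
    have := (gF_mellin (s := (2:ℝ) + (-y:ℝ) * I) (by simp)).2
    rw [GG, ← this]
    congr 1
    push_cast; ring
  have hgx : gF x = ((Pf x - (x-1)^2/2 : ℝ) : ℂ) := by simp [gF, hx]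
  have hcont : ContinuousAt gF x := by
    have h1 : ContinuousAt (fun u : ℝ => ((Pf u - (u-1)^2/2 : ℝ) : ℂ)) x := by
      refine Complex.continuous_ofReal.continuousAt.comp ?_
      exact (Pf_continuousAt hx0).sub (by fun_prop)
    refine h1.congr ?_
    filter_upwards [eventually_gt_nhds hx] with u hu
    simp [gF, hu]
  have hconv : MellinConvergent gF ((-3:ℝ):ℂ) := by
    have := (gF_mellin (s := 2) (by simp)).1
    convert this using 1; push_cast; ring
  have hV : VerticalIntegrable (mellin gF) (-3) := by
    unfold VerticalIntegrable
    have := (FF_int hRH (x := 1) (σ := 2) (by norm_num) (by norm_num) (by norm_num)).comp_neg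
    refine this.congr ?_
    filter_upwards with y
    rw [hM]
    simp
  have h := mellinInv_mellin_eq (-3) gF hx0 hconv hV hcont
  rw [← hgx, ← h, mellinInv, ← shift hRH hx, ← integral_neg_eq_self]
  congr 1
  refine integral_congr_ae ?_
  filter_upwards with y
  rw [hM, smul_eq_mul, neg_neg]
  congr 2
  push_cast; ring

lemma cpow_diff_bound {x h : ℝ} (hx : 1 < x) (hh : 0 < h) (hhx : h ≤ x) (y : ℝ) :
    ‖((x+h : ℝ):ℂ) ^ (((11/20:ℝ) + y * I : ℂ)+1) - (x:ℂ) ^ (((11/20:ℝ) + y * I : ℂ)+1)‖ ≤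
      8 * (h ^ (9/10:ℝ) * x ^ (13/20:ℝ)) * (1 + |y|) ^ (9/10:ℝ) := by
  have hx0 : 0 < x := by linarith
  set w : ℂ := ((11/20:ℝ) + y * I : ℂ)+1 with hw
  have hwre : w.re = 31/20 := by rw [hw]; simp; norm_num
  have hwn : ‖w‖ ≤ 2 * (1 + |y|) := by
    have := Complex.norm_le_abs_re_add_abs_im w
    have him : w.im = y := by rw [hw]; simp
    rw [hwre, him, abs_of_nonneg (by norm_num)] at this
    linarith [abs_nonneg y]
  set n := ‖((x+h : ℝ):ℂ) ^ w - (x:ℂ) ^ w‖ with hn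
  have hp1 : (2:ℝ) ^ (31/20:ℝ) ≤ 4 := by
    calc (2:ℝ) ^ (31/20:ℝ) ≤ 2 ^ (2:ℝ) := Real.rpow_le_rpow_of_exponent_le (by norm_num) (by norm_num)
      _ = 4 := by norm_num
  have hp2 : (2:ℝ) ^ (11/20:ℝ) ≤ 2 := by
    calc (2:ℝ) ^ (11/20:ℝ) ≤ 2 ^ (1:ℝ) := Real.rpow_le_rpow_of_exponent_le (by norm_num) (by norm_num)
      _ = 2 := by norm_num
  have ha : n ≤ 8 * x ^ (31/20:ℝ) := by
    have h1 : n ≤ (x+h) ^ (31/20:ℝ) + x ^ (31/20:ℝ) := by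
      refine (norm_sub_le _ _).trans ?_
      rw [norm_cpow_eq_rpow_re_of_pos (by linarith), norm_cpow_eq_rpow_re_of_pos hx0, hwre]
    have h2 : (x+h) ^ (31/20:ℝ) ≤ 4 * x ^ (31/20:ℝ) := by
      calc (x+h) ^ (31/20:ℝ) ≤ (2*x) ^ (31/20:ℝ) := Real.rpow_le_rpow (by linarith) (by linarith) (by norm_num)
        _ = 2 ^ (31/20:ℝ) * x ^ (31/20:ℝ) := Real.mul_rpow (by norm_num) hx0.le
        _ ≤ _ := by gcongr
    have : 0 < x ^ (31/20:ℝ) := by positivity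
    linarith
  have hb : n ≤ 8 * ((1 + |y|) * h * x ^ (11/20:ℝ)) := by
    have hder : ∀ t ∈ Icc x (x+h), HasDerivWithinAt (fun t : ℝ => (t:ℂ) ^ w) (w * (t:ℂ) ^ (w-1) * 1) (Icc x (x+h)) t := by
      intro t ht
      have ht0 : 0 < t := by linarith [ht.1]
      have := ((hasDerivAt_id (t:ℂ)).cpow_const (c := w) (Or.inl (by simpa using ht0))).comp_ofReal
      exact this.hasDerivWithinAt
    have hbd : ∀ t ∈ Icc x (x+h), ‖w * (t:ℂ) ^ (w-1) * 1‖ ≤ 2 * (1 + |y|) * (2 * x ^ (11/20:ℝ)) := by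
      intro t ht
      have ht0 : 0 < t := by linarith [ht.1]
      rw [mul_one, norm_mul, norm_cpow_eq_rpow_re_of_pos ht0, sub_re, hwre, one_re,
        show (31/20 - 1 : ℝ) = 11/20 by norm_num]
      have : t ^ (11/20:ℝ) ≤ 2 * x ^ (11/20:ℝ) := by
        calc t ^ (11/20:ℝ) ≤ (2*x) ^ (11/20:ℝ) := Real.rpow_le_rpow ht0.le (by linarith [ht.2]) (by norm_num)
          _ = 2 ^ (11/20:ℝ) * x ^ (11/20:ℝ) := Real.mul_rpow (by norm_num) hx0.le
          _ ≤ _ := by gcongr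
      gcongr
    have := Convex.norm_image_sub_le_of_norm_hasDerivWithin_le hder hbd (convex_Icc _ _)
      (left_mem_Icc.2 (by linarith)) (right_mem_Icc.2 (by linarith : x ≤ x+h))
    simp only [add_sub_cancel_left, Real.norm_eq_abs, abs_of_pos hh] at this
    have h3 : 0 ≤ (1 + |y|) * h * x ^ (11/20:ℝ) := by positivity
    calc n ≤ _ := this
      _ ≤ _ := by nlinarith
  have hn0 : 0 ≤ n := norm_nonneg _
  have hy : 0 < 1 + |y| := by positivity
  calc n = n ^ (1/10:ℝ) * n ^ (9/10:ℝ) := by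
        rw [← Real.rpow_add_of_nonneg hn0 (by norm_num) (by norm_num)]; norm_num
    _ ≤ (8 * x ^ (31/20:ℝ)) ^ (1/10:ℝ) * (8 * ((1 + |y|) * h * x ^ (11/20:ℝ))) ^ (9/10:ℝ) := by gcongr
    _ = (8 ^ (1/10:ℝ) * 8 ^ (9/10:ℝ)) * (h ^ (9/10:ℝ) * (x ^ (31/200:ℝ) * x ^ (99/200:ℝ))) * (1 + |y|) ^ (9/10:ℝ) := by
        rw [Real.mul_rpow (by norm_num) (by positivity), Real.mul_rpow (by norm_num) (by positivity),
          Real.mul_rpow (by positivity) (by positivity), Real.mul_rpow (by positivity) (by positivity),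
          ← Real.rpow_mul hx0.le, ← Real.rpow_mul hx0.le]
        norm_num
        ring
    _ = _ := by
        rw [← Real.rpow_add hx0, ← Real.rpow_add (by norm_num)]
        norm_num

lemma Delta_bound (hRH : RiemannHypothesis) : ∃ B : ℝ, 0 < B ∧ ∀ x h : ℝ, 1 < x → h ≤ x → √x ≤ h →
    |(Pf (x+h) - (x+h-1)^2/2) - (Pf x - (x-1)^2/2)| ≤ B * h * x ^ (3/5:ℝ) := by
  obtain ⟨A, hA, hG⟩ := GG_bound hRH
  set J := ∫ y : ℝ, (1 + ‖y‖) ^ (-(21/20) : ℝ) with hJ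
  have hJi : Integrable (fun y : ℝ => (1 + ‖y‖) ^ (-(21/20) : ℝ)) :=
    integrable_one_add_norm (by simp; norm_num)
  have hJ0 : 0 ≤ J := integral_nonneg fun y => by positivity
  refine ⟨8 * A * J + 1, by positivity, fun x h hx hhx hsx => ?_⟩
  have hx0 : 0 < x := by linarith
  have hh : 0 < h := lt_of_lt_of_le (Real.sqrt_pos.2 hx0) hsx
  have e1 := Pf_formula hRH (x := x+h) (by linarith)
  have e2 := Pf_formula hRH hx
  have i1 := FF_int hRH (x := x+h) (σ := 11/20) (by linarith) (by norm_num) (by norm_num)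
  have i2 := FF_int hRH (x := x) (σ := 11/20) (by linarith) (by norm_num) (by norm_num)
  have key : ‖∫ y : ℝ, ((((x+h:ℝ):ℂ) ^ (((11/20:ℝ) + y * I : ℂ)+1) * GG ((11/20:ℝ) + y * I))
      - ((x:ℂ) ^ (((11/20:ℝ) + y * I : ℂ)+1) * GG ((11/20:ℝ) + y * I)))‖ ≤
      8 * A * (h ^ (9/10:ℝ) * x ^ (13/20:ℝ)) * J := by
    rw [hJ, ← integral_const_mul]
    refine norm_integral_le_of_norm_le (hJi.const_mul _) ?_
    filter_upwards with y
    rw [← sub_mul, norm_mul]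
    have h1 := cpow_diff_bound hx hh hhx y
    have h2 := hG ((11/20:ℝ) + y * I) (by simp) (by simp; norm_num)
    have h3 : ((((11/20:ℝ):ℂ) + y * I)).im = y := by simp
    rw [h3] at h2
    calc _ ≤ (8 * (h ^ (9/10:ℝ) * x ^ (13/20:ℝ)) * (1 + |y|) ^ (9/10:ℝ)) * (A * (1 + |y|) ^ (-(39/20) : ℝ)) := by
          gcongr
      _ = 8 * A * (h ^ (9/10:ℝ) * x ^ (13/20:ℝ)) * ((1 + |y|) ^ (9/10:ℝ) * (1 + |y|) ^ (-(39/20) : ℝ)) := by ring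
      _ = _ := by
          rw [← Real.rpow_add (by positivity), Real.norm_eq_abs]
          norm_num
  have e3 : (((Pf (x+h) - (x+h-1)^2/2) - (Pf x - (x-1)^2/2) : ℝ) : ℂ) = (1 / (2 * Real.pi) : ℝ) •
      ∫ y : ℝ, ((((x+h:ℝ):ℂ) ^ (((11/20:ℝ) + y * I : ℂ)+1) * GG ((11/20:ℝ) + y * I))
      - ((x:ℂ) ^ (((11/20:ℝ) + y * I : ℂ)+1) * GG ((11/20:ℝ) + y * I))) := by
    rw [integral_sub i1 i2, smul_sub, ← e1, ← e2]; push_cast; ring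
  rw [← Real.norm_eq_abs, ← Complex.norm_real, e3, norm_smul, Real.norm_eq_abs, abs_of_pos (by positivity)]
  have hpi : 1 / (2 * Real.pi) ≤ 1 := by
    rw [div_le_one (by positivity)]; linarith [Real.pi_gt_three]
  have hpw : h ^ (9/10:ℝ) * x ^ (13/20:ℝ) ≤ h * x ^ (3/5:ℝ) := by
    have h1 : x ^ (1/20:ℝ) ≤ h ^ (1/10:ℝ) := by
      calc x ^ (1/20:ℝ) = (√x) ^ (1/10:ℝ) := by
            rw [Real.sqrt_eq_rpow, ← Real.rpow_mul hx0.le]; norm_num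
        _ ≤ _ := Real.rpow_le_rpow (Real.sqrt_nonneg _) hsx (by norm_num)
    calc h ^ (9/10:ℝ) * x ^ (13/20:ℝ) = h ^ (9/10:ℝ) * x ^ (1/20:ℝ) * x ^ (3/5:ℝ) := by
          rw [mul_assoc, ← Real.rpow_add hx0]; norm_num
      _ ≤ h ^ (9/10:ℝ) * h ^ (1/10:ℝ) * x ^ (3/5:ℝ) := by gcongr
      _ = _ := by rw [← Real.rpow_add hh]; norm_num
  calc _ ≤ 1 * (8 * A * (h ^ (9/10:ℝ) * x ^ (13/20:ℝ)) * J) := by gcongr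
    _ ≤ 1 * (8 * A * (h * x ^ (3/5:ℝ)) * J) := by gcongr
    _ ≤ _ := by
      have : 0 < h * x ^ (3/5:ℝ) := by positivity
      nlinarith

lemma psi_bound (hRH : RiemannHypothesis) : ∃ B : ℝ, 0 < B ∧ ∀ t : ℝ, 1 ≤ t →
    |Chebyshev.psi t - t| ≤ B * t ^ (3/5:ℝ) := by
  obtain ⟨B, hB, hD⟩ := Delta_bound hRH
  refine ⟨B + 4, by positivity, fun t ht => ?_⟩
  have hs : √t ≤ t ^ (3/5:ℝ) := by
    rw [Real.sqrt_eq_rpow]; exact Real.rpow_le_rpow_of_exponent_le ht (by norm_num)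
  have h1t : 1 ≤ t ^ (3/5:ℝ) := Real.one_le_rpow ht (by norm_num)
  have hs1 : 1 ≤ √t := Real.one_le_sqrt.2 ht
  have hsq : √t * √t = t := Real.mul_self_sqrt (by linarith)
  have hBt : 0 < B * t ^ (3/5:ℝ) := by positivity
  rw [abs_le]
  constructor
  · rcases lt_or_ge t 4 with h4 | h4
    · have := Chebyshev.psi_nonneg t
      nlinarith
    · have hs2 : 2 ≤ √t := by
        rw [show (2:ℝ) = √4 by rw [show (4:ℝ) = 2^2 by norm_num, Real.sqrt_sq (by norm_num)]]
        exact Real.sqrt_le_sqrt h4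
      have h := hD (t - √t) (√t) (by nlinarith) (by nlinarith) (Real.sqrt_le_sqrt (by linarith))
      have hP := (Pf_sub (u := t - √t) (v := t) (by nlinarith) (by linarith)).2
      rw [sub_add_cancel] at h
      have hle : (t - √t) ^ (3/5:ℝ) ≤ t ^ (3/5:ℝ) := Real.rpow_le_rpow (by nlinarith) (by linarith) (by norm_num)
      have h' := (abs_le.1 h).1
      have hm : B * √t * (t - √t) ^ (3/5:ℝ) ≤ B * √t * t ^ (3/5:ℝ) := by gcongr
      rw [sub_sub_cancel] at hP
      have : √t * (t - √t - 1 - B * t ^ (3/5:ℝ)) ≤ √t * Chebyshev.psi t := by nlinarith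
      have := le_of_mul_le_mul_left this (by linarith)
      nlinarith
  · rcases eq_or_lt_of_le ht with h1 | h1
    · rw [← h1, Chebyshev.psi_eq_zero_of_lt_two (by norm_num)]
      norm_num; linarith
    · have h := hD t (√t) h1 (by nlinarith) le_rfl
      have hP := (Pf_sub (u := t) (v := t + √t) (by linarith) (by linarith)).1
      have h' := (abs_le.1 h).2
      rw [add_sub_cancel_left] at hP
      have : √t * Chebyshev.psi t ≤ √t * (t + √t / 2 + B * t ^ (3/5:ℝ)) := by nlinarith
      have := le_of_mul_le_mul_left this (by linarith)
      nlinarith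

lemma theta_bound (hRH : RiemannHypothesis) : ∃ B : ℝ, 1 ≤ B ∧ ∀ t : ℝ, 1 ≤ t →
    |Chebyshev.theta t - t| ≤ B * t ^ (3/5:ℝ) := by
  obtain ⟨B, hB, h⟩ := psi_bound hRH
  obtain ⟨C, hC⟩ := Chebyshev.psi_sub_theta_le_mul_sqrt
  refine ⟨B + |C| + 1, by linarith [abs_nonneg C], fun t ht => ?_⟩
  have hs : √t ≤ t ^ (3/5:ℝ) := by
    rw [Real.sqrt_eq_rpow]; exact Real.rpow_le_rpow_of_exponent_le ht (by norm_num)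
  have h1t : 1 ≤ t ^ (3/5:ℝ) := Real.one_le_rpow ht (by norm_num)
  have h1 := abs_le.1 (h t ht)
  have h2 := Chebyshev.theta_le_psi t
  have h3 := hC t
  have h4 : C * √t ≤ |C| * t ^ (3/5:ℝ) := by
    calc C * √t ≤ |C| * √t := by gcongr; exact le_abs_self C
      _ ≤ _ := by gcongr
  have h5 : 0 ≤ |C| * t ^ (3/5:ℝ) := by positivity
  rw [abs_le]
  constructor <;> nlinarith

end Helpers

section Helpers2
open MeasureTheory Set Filter Topology


noncomputable def lgp (n : ℕ) : ℝ := if n.Prime then Real.log n else 0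

lemma lgp_nonneg (n : ℕ) : 0 ≤ lgp n := by
  unfold lgp; split_ifs
  · exact Real.log_natCast_nonneg n
  · exact le_rfl

lemma theta_eq_lgp (t : ℝ) : Chebyshev.theta t = ∑ k ∈ Finset.Icc 0 ⌊t⌋₊, lgp k := by
  rw [Chebyshev.theta_eq_sum_Icc, Finset.sum_filter]; rfl

lemma abel_bound {B : ℝ} (hB : 0 ≤ B)
    (hθ : ∀ t : ℝ, 1 ≤ t → |Chebyshev.theta t - t| ≤ B * t ^ (3/5:ℝ)) {y z M : ℝ}
    (hy : 1 ≤ y) (hyz : y ≤ z) {f f' : ℝ → ℝ} (hf : ∀ t ∈ Icc y z, HasDerivAt f (f' t) t)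
    (hf' : ContinuousOn f' (Icc y z)) (hM : ∀ t ∈ Icc y z, |f' t| * t ^ (3/5:ℝ) ≤ M / t) :
    |∑ k ∈ Finset.Ioc ⌊y⌋₊ ⌊z⌋₊, f k * lgp k - ∫ t in y..z, f t| ≤
      B * (|f z| * z ^ (3/5:ℝ) + |f y| * y ^ (3/5:ℝ) + M * Real.log (z / y)) := by
  have hy0 : 0 < y := by linarith
  have hcf : ContinuousOn f (Icc y z) := fun t ht => (hf t ht).continuousAt.continuousWithinAt
  have hdi : IntegrableOn (deriv f) (Icc y z) := by
    refine (integrableOn_congr_fun (fun t ht => ?_) measurableSet_Icc).2 (hf'.integrableOn_compact isCompact_Icc)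
    exact (hf t ht).deriv
  have h1 := sum_mul_eq_sub_sub_integral_mul lgp hy0.le hyz (fun t ht => (hf t ht).differentiableAt) hdi
  simp only [← theta_eq_lgp] at h1
  have h2 : ∫ t in Ioc y z, deriv f t * Chebyshev.theta t = ∫ t in y..z, f' t * Chebyshev.theta t := by
    rw [intervalIntegral.integral_of_le hyz]
    refine setIntegral_congr_fun measurableSet_Ioc fun t ht => ?_
    rw [(hf t (Ioc_subset_Icc_self ht)).deriv]
  have if' : IntervalIntegrable f' volume y z := (hf'.mono (by rw [uIcc_of_le hyz])).intervalIntegrable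
  have iff0 : IntervalIntegrable f volume y z := (hcf.mono (by rw [uIcc_of_le hyz])).intervalIntegrable
  have ift : IntervalIntegrable (fun t => f' t * t) volume y z :=
    ((hf'.mul continuousOn_id).mono (by rw [uIcc_of_le hyz])).intervalIntegrable
  have ith : IntervalIntegrable (fun t => f' t * Chebyshev.theta t) volume y z := by
    have hm : IntervalIntegrable Chebyshev.theta volume y z := Chebyshev.theta_mono.intervalIntegrable
    rw [intervalIntegrable_iff_integrableOn_Icc_of_le hyz] at hm ⊢
    exact hm.continuousOn_mul hf' isCompact_Icc
  have h3 : ∫ t in y..z, (f' t * t + f t) = f z * z - f y * y := by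
    refine intervalIntegral.integral_eq_sub_of_hasDerivAt (f := fun t => f t * t) (fun t ht => ?_) (ift.add iff0)
    rw [uIcc_of_le hyz] at ht
    have := (hf t ht).mul (hasDerivAt_id t)
    convert! this using 1
    simp
  rw [intervalIntegral.integral_add ift iff0] at h3
  have h4 : ∫ t in y..z, f' t * (Chebyshev.theta t - t) =
      (∫ t in y..z, f' t * Chebyshev.theta t) - ∫ t in y..z, f' t * t := by
    rw [← intervalIntegral.integral_sub ith ift]
    congr 1; ext t; ring
  have h5 : |∫ t in y..z, f' t * (Chebyshev.theta t - t)| ≤ B * (M * Real.log (z/y)) := by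
    have e : B * (M * Real.log (z/y)) = ∫ t in y..z, B * M * t⁻¹ := by
      rw [intervalIntegral.integral_const_mul, integral_inv_of_pos hy0 (by linarith)]; ring
    rw [e, ← Real.norm_eq_abs]
    refine intervalIntegral.norm_integral_le_of_norm_le hyz ?_ ?_
    · filter_upwards with t ht
      have ht' := hM t (Ioc_subset_Icc_self ht)
      rw [Real.norm_eq_abs, abs_mul]
      calc _ ≤ |f' t| * (B * t ^ (3/5:ℝ)) := by
            gcongr; exact hθ t (by linarith [ht.1])
        _ = B * (|f' t| * t ^ (3/5:ℝ)) := by ring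
        _ ≤ B * (M / t) := by gcongr
        _ = _ := by rw [div_eq_mul_inv]; ring
    · refine ContinuousOn.intervalIntegrable ?_
      rw [uIcc_of_le hyz]
      refine continuousOn_const.mul (continuousOn_id.inv₀ fun t ht => ?_)
      have : y ≤ t := ht.1
      simp only [id]; linarith
  have h6 : ∑ k ∈ Finset.Ioc ⌊y⌋₊ ⌊z⌋₊, f k * lgp k - ∫ t in y..z, f t =
      f z * (Chebyshev.theta z - z) - f y * (Chebyshev.theta y - y)
        - ∫ t in y..z, f' t * (Chebyshev.theta t - t) := by
    rw [h1, h2, h4]; linarith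
  rw [h6]
  have b1 : |f z * (Chebyshev.theta z - z)| ≤ |f z| * (B * z ^ (3/5:ℝ)) := by
    rw [abs_mul]; gcongr; exact hθ z (by linarith)
  have b2 : |f y * (Chebyshev.theta y - y)| ≤ |f y| * (B * y ^ (3/5:ℝ)) := by
    rw [abs_mul]; gcongr; exact hθ y (by linarith)
  calc _ ≤ _ := abs_sub _ _
    _ ≤ |f z * (Chebyshev.theta z - z)| + |f y * (Chebyshev.theta y - y)| + _ := by
        gcongr; exact abs_sub _ _
    _ ≤ |f z| * (B * z ^ (3/5:ℝ)) + |f y| * (B * y ^ (3/5:ℝ)) + B * (M * Real.log (z/y)) := by gcongr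
    _ = _ := by ring

noncomputable def SS (X y : ℝ) : ℝ :=
  ∑ p ∈ Finset.Ioc ⌊y⌋₊ ⌊X / y⌋₊, (Chebyshev.theta (X / p) - Chebyshev.theta y) * lgp p

noncomputable def ff (u : ℝ) : ℝ := u - 1 + Real.exp (-u)

set_option maxHeartbeats 2000000 in
lemma SS_bound {B : ℝ} (hB : 1 ≤ B)
    (hθ : ∀ t : ℝ, 1 ≤ t → |Chebyshev.theta t - t| ≤ B * t ^ (3/5:ℝ)) {X y : ℝ}
    (hy : 1 ≤ y) (hX : y ^ 2 ≤ X) :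
    |SS X y - X * ff (Real.log (X / y^2))| ≤
      4 * B^2 * (X * y ^ (-(2/5):ℝ) * Real.log (X / y^2) + X ^ (3/5:ℝ) * (1 + Real.log (X / y^2))) := by
  have hy0 : 0 < y := by linarith
  have hX0 : 0 < X := by nlinarith
  set z := X / y with hz
  set u := Real.log (X / y^2) with hu
  have hyz : y ≤ z := by rw [hz, le_div_iff₀ hy0]; nlinarith
  have hz0 : 0 < z := by linarith
  have hzy : z / y = X / y^2 := by rw [hz]; field_simp
  have hu0 : 0 ≤ u := Real.log_nonneg (by rw [le_div_iff₀ (by positivity)]; linarith)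
  have heu : Real.exp (-u) = y^2 / X := by
    rw [Real.exp_neg, hu, Real.exp_log (by positivity)]; field_simp
  have hXz : X / z = y := by rw [hz]; field_simp
  have hpw : y ^ (-(2/5):ℝ) = y ^ (3/5:ℝ) / y := by
    rw [show (-(2/5):ℝ) = 3/5 - 1 by norm_num, Real.rpow_sub_one hy0.ne']
  -- first application
  have A1 := abel_bound (by linarith : (0:ℝ) ≤ B) hθ hy hyz (f := fun t => X / t - y) (f' := fun t => -X / t^2)
    (M := X * y ^ (-(2/5):ℝ)) ?_ ?_ ?_
  rotate_left
  · intro t ht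
    have ht0 : t ≠ 0 := by linarith [ht.1]
    have := ((hasDerivAt_id t).inv ht0).const_mul X |>.sub_const y
    convert! this using 1
    simp; ring
  · refine continuousOn_const.div (by fun_prop) fun t ht => ?_
    have : 0 < t := by linarith [ht.1]
    positivity
  · intro t ht
    have ht0 : 0 < t := by linarith [ht.1]
    rw [abs_div, abs_neg, abs_of_pos hX0, abs_of_pos (by positivity : 0 < t^2)]
    have h1 : t ^ (-(2/5):ℝ) ≤ y ^ (-(2/5):ℝ) := Real.rpow_le_rpow_of_nonpos hy0 ht.1 (by norm_num)
    have h2 : t ^ (-(2/5):ℝ) = t ^ (3/5:ℝ) / t := by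
      rw [show (-(2/5):ℝ) = 3/5 - 1 by norm_num, Real.rpow_sub_one ht0.ne']
    calc X / t^2 * t ^ (3/5:ℝ) = X * t ^ (-(2/5):ℝ) / t := by rw [h2]; field_simp
      _ ≤ _ := by gcongr
  -- second application
  have A2 := abel_bound (by linarith : (0:ℝ) ≤ B) hθ hy hyz (f := fun t => X ^ (3/5:ℝ) * t ^ (-(3/5):ℝ))
    (f' := fun t => X ^ (3/5:ℝ) * (-(3/5) * t ^ (-(3/5) - 1:ℝ))) (M := X ^ (3/5:ℝ)) ?_ ?_ ?_
  rotate_left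
  · intro t ht
    have ht0 : t ≠ 0 := by linarith [ht.1]
    exact (Real.hasDerivAt_rpow_const (Or.inl ht0)).const_mul _
  · intro t ht
    have ht0 : t ≠ 0 := by linarith [ht.1]
    exact ((Real.continuousAt_rpow_const _ _ (Or.inl ht0)).const_mul _ |>.const_mul _).continuousWithinAt
  · intro t ht
    have ht0 : 0 < t := by linarith [ht.1]
    rw [abs_mul, abs_mul, abs_of_pos (by positivity : 0 < X ^ (3/5:ℝ)), abs_of_pos (by positivity : 0 < t ^ (-(3/5) - 1:ℝ)),
      mul_assoc, mul_assoc, ← Real.rpow_add ht0]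
    rw [show (-(3/5) - 1 + 3/5 : ℝ) = -1 by norm_num, Real.rpow_neg_one, div_eq_mul_inv _ t,
      show |(-(3/5):ℝ)| = 3/5 by rw [abs_neg, abs_of_pos (by norm_num)]]
    have : 0 < X ^ (3/5:ℝ) * t⁻¹ := by positivity
    nlinarith
  simp only [hzy, ← hu, hXz] at A1 A2
  have I1 : ∫ t in y..z, (X / t - y) = X * ff u := by
    have e : ∀ t : ℝ, X / t - y = X * t⁻¹ - y := fun t => by rw [div_eq_mul_inv]
    have ii : IntervalIntegrable (fun t : ℝ => X * t⁻¹) volume y z := by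
      refine ContinuousOn.intervalIntegrable ?_
      rw [uIcc_of_le hyz]
      refine continuousOn_const.mul (continuousOn_id.inv₀ fun t ht => ?_)
      have : y ≤ t := ht.1
      simp only [id]; linarith
    simp only [e]
    rw [intervalIntegral.integral_sub ii (by simp), intervalIntegral.integral_const_mul,
      integral_inv_of_pos hy0 hz0, intervalIntegral.integral_const, hzy, ← hu, ff, heu, smul_eq_mul, hz]
    field_simp; ring
  have I2 : ∫ t in y..z, X ^ (3/5:ℝ) * t ^ (-(3/5):ℝ) ≤ X * y ^ (-(2/5):ℝ) * u := by
    have hc : ContinuousOn (fun t : ℝ => X ^ (3/5:ℝ) * t ^ (-(3/5):ℝ)) (Icc y z) := by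
      intro t ht
      have ht0 : t ≠ 0 := by linarith [ht.1]
      exact ((Real.continuousAt_rpow_const _ _ (Or.inl ht0)).const_mul _).continuousWithinAt
    have hc2 : ContinuousOn (fun t : ℝ => X * y ^ (-(2/5):ℝ) * t⁻¹) (Icc y z) := by
      refine continuousOn_const.mul (continuousOn_id.inv₀ fun t ht => ?_)
      have : y ≤ t := ht.1
      simp only [id]; linarith
    calc ∫ t in y..z, X ^ (3/5:ℝ) * t ^ (-(3/5):ℝ) ≤ ∫ t in y..z, X * y ^ (-(2/5):ℝ) * t⁻¹ := by
          refine intervalIntegral.integral_mono_on hyz (hc.mono (by rw [uIcc_of_le hyz])).intervalIntegrable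
            (hc2.mono (by rw [uIcc_of_le hyz])).intervalIntegrable fun t ht => ?_
          have ht0 : 0 < t := by linarith [ht.1]
          have h1 : t ^ (-(3/5):ℝ) = t ^ (2/5:ℝ) * t⁻¹ := by
            rw [← Real.rpow_neg_one t, ← Real.rpow_add ht0]; norm_num
          have h2 : X ^ (3/5:ℝ) * z ^ (2/5:ℝ) = X * y ^ (-(2/5):ℝ) := by
            rw [hz, Real.div_rpow hX0.le hy0.le, ← mul_div_assoc, ← Real.rpow_add hX0, Real.rpow_neg hy0.le]
            norm_num [div_eq_mul_inv]
          rw [h1, ← h2, ← mul_assoc]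
          have : t ^ (2/5:ℝ) ≤ z ^ (2/5:ℝ) := Real.rpow_le_rpow ht0.le ht.2 (by norm_num)
          gcongr
      _ = _ := by
          rw [intervalIntegral.integral_const_mul, integral_inv_of_pos hy0 hz0, hzy]
  -- boundary terms
  have E1 : |y - y| * z ^ (3/5:ℝ) + |X / y - y| * y ^ (3/5:ℝ) ≤ X * y ^ (-(2/5):ℝ) * u := by
    have h1 : 0 ≤ X / y - y := by rw [← hz]; linarith
    rw [sub_self, abs_zero, zero_mul, zero_add, abs_of_nonneg h1, hpw]
    have h2 : 1 - u ≤ y^2 / X := by rw [← heu]; linarith [Real.add_one_le_exp (-u)]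
    have h3 : X / y - y = X / y * (1 - y^2/X) := by field_simp
    have h4 : X / y - y ≤ X / y * u := by rw [h3]; gcongr; linarith
    calc _ ≤ X / y * u * y ^ (3/5:ℝ) := by gcongr
      _ = _ := by field_simp
  have E2 : |X ^ (3/5:ℝ) * z ^ (-(3/5):ℝ)| * z ^ (3/5:ℝ) = X ^ (3/5:ℝ) := by
    rw [abs_of_pos (by positivity), mul_assoc, ← Real.rpow_add hz0]; norm_num
  have E3 : |X ^ (3/5:ℝ) * y ^ (-(3/5):ℝ)| * y ^ (3/5:ℝ) = X ^ (3/5:ℝ) := by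
    rw [abs_of_pos (by positivity), mul_assoc, ← Real.rpow_add hy0]; norm_num
  rw [I1] at A1
  rw [E2, E3] at A2
  have A2' := (abs_le.1 A2).2
  -- compare SS with sum of X/p - y
  have D : |SS X y - ∑ k ∈ Finset.Ioc ⌊y⌋₊ ⌊z⌋₊, (X / k - y) * lgp k| ≤
      2 * B * ∑ k ∈ Finset.Ioc ⌊y⌋₊ ⌊z⌋₊, X ^ (3/5:ℝ) * (k:ℝ) ^ (-(3/5):ℝ) * lgp k := by
    rw [SS, ← Finset.sum_sub_distrib, Finset.mul_sum]
    refine (Finset.abs_sum_le_sum_abs _ _).trans (Finset.sum_le_sum fun k hk => ?_)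
    rw [Finset.mem_Ioc] at hk
    have hk1 : y < k := (Nat.floor_lt hy0.le).1 hk.1
    have hk2 : (k:ℝ) ≤ z := (Nat.le_floor_iff hz0.le).1 hk.2
    have hk0 : (0:ℝ) < k := by linarith
    have hXk : y ≤ X / k := by
      rw [le_div_iff₀ hk0]
      rw [hz, le_div_iff₀ hy0] at hk2; linarith
    rw [← sub_mul, abs_mul, abs_of_nonneg (lgp_nonneg k), ← mul_assoc]
    refine mul_le_mul_of_nonneg_right ?_ (lgp_nonneg k)
    have t1 := hθ (X / k) (by linarith)
    have t2 := hθ y hy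
    have t3 : y ^ (3/5:ℝ) ≤ (X / k) ^ (3/5:ℝ) := Real.rpow_le_rpow hy0.le hXk (by norm_num)
    have t4 : (X / k) ^ (3/5:ℝ) = X ^ (3/5:ℝ) * (k:ℝ) ^ (-(3/5):ℝ) := by
      rw [Real.div_rpow hX0.le hk0.le, Real.rpow_neg hk0.le, div_eq_mul_inv]
    rw [← t4]
    have t5 : B * y ^ (3/5:ℝ) ≤ B * (X / k) ^ (3/5:ℝ) := by gcongr
    rw [abs_le] at t1 t2 ⊢
    constructor <;> linarith [t1.1, t1.2, t2.1, t2.2]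
  set W := X * y ^ (-(2/5):ℝ) * u with hW
  have hW0 : 0 ≤ W := by positivity
  set V := X ^ (3/5:ℝ) with hV
  have hV0 : 0 < V := by positivity
  have F1 : ∑ k ∈ Finset.Ioc ⌊y⌋₊ ⌊z⌋₊, V * (k:ℝ) ^ (-(3/5):ℝ) * lgp k ≤ W + B * (2 * V + V * u) := by
    linarith
  have F2 : 2 * B * ∑ k ∈ Finset.Ioc ⌊y⌋₊ ⌊z⌋₊, V * (k:ℝ) ^ (-(3/5):ℝ) * lgp k ≤ 2 * B * (W + B * (2 * V + V * u)) := by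
    gcongr
  have F3 : |∑ k ∈ Finset.Ioc ⌊y⌋₊ ⌊z⌋₊, (X / k - y) * lgp k - X * ff u| ≤ B * (W + W) := by
    refine A1.trans ?_
    gcongr
  have F4 := abs_sub_le (SS X y) (∑ k ∈ Finset.Ioc ⌊y⌋₊ ⌊z⌋₊, (X / k - y) * lgp k) (X * ff u)
  have hVu : 0 ≤ V * u := by positivity
  have hBB : B ≤ B^2 := by nlinarith
  have : B * W ≤ B^2 * W := by gcongr
  have : 0 ≤ B^2 * (V * u) := by positivity
  nlinarith

lemma ff_lower {u : ℝ} (h0 : 0 ≤ u) : (u ≤ 2 → u^2/4 ≤ ff u) ∧ (2 < u → u/2 ≤ ff u) := by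
  unfold ff
  constructor
  · intro h
    have h1 := Real.add_one_le_exp (-(u/2))
    have h2 : Real.exp (-u) = Real.exp (-(u/2)) * Real.exp (-(u/2)) := by
      rw [← Real.exp_add]; congr 1; ring
    rw [h2]
    nlinarith
  · intro h
    have := Real.exp_pos (-u)
    linarith

lemma ff_nonneg {u : ℝ} (h0 : 0 ≤ u) : 0 ≤ ff u := by
  unfold ff; linarith [Real.add_one_le_exp (-u)]

lemma ff_half (u : ℝ) : ff (u/2) ≤ ff u / 2 := by
  unfold ff
  have h2 : Real.exp (-u) = Real.exp (-(u/2)) * Real.exp (-(u/2)) := by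
    rw [← Real.exp_add]; congr 1; ring
  rw [h2]
  nlinarith [sq_nonneg (1 - Real.exp (-(u/2)))]

lemma key_ineq {D L K u y : ℝ} (hD : 1 ≤ D) (hK : 1 ≤ K) (hL : 1 ≤ L) (hu0 : 0 ≤ u) (hy : 1 ≤ y) :
    D * (y ^ (-(2/5):ℝ) * u) ≤ u / L * ff u / 2 + 8 * D^2 * (K * L * y ^ (-(1/2):ℝ)) := by
  have hy0 : 0 < y := by linarith
  have hf := ff_nonneg hu0
  set a := y ^ (-(1/10):ℝ) with ha
  have ha0 : 0 < a := by positivity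
  have ha1 : a ≤ 1 := Real.rpow_le_one_of_one_le_of_nonpos hy (by norm_num)
  have e4 : y ^ (-(2/5):ℝ) = a ^ 4 := by
    rw [ha, ← Real.rpow_natCast, ← Real.rpow_mul hy0.le]; norm_num
  have e5 : y ^ (-(1/2):ℝ) = a ^ 5 := by
    rw [ha, ← Real.rpow_natCast, ← Real.rpow_mul hy0.le]; norm_num
  rw [e4, e5]
  have hKL : 1 ≤ K * L := by nlinarith
  rcases le_or_gt u (8 * D * (K * L) * a) with h | h
  · have h1 : D * (a ^ 4 * u) ≤ D * (a ^ 4 * (8 * D * (K * L) * a)) := by gcongr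
    have h2 : 0 ≤ u / L * ff u / 2 := by positivity
    calc _ ≤ _ := h1
      _ = 8 * D^2 * (K * L * a^5) := by ring
      _ ≤ _ := by linarith
  · have hff : 2 * D * L * a ^ 4 ≤ ff u := by
      have ha2 : a ^ 4 ≤ a ^ 2 := pow_le_pow_of_le_one ha0.le ha1 (by norm_num)
      have ha3 : a ^ 4 ≤ a := by simpa using pow_le_pow_of_le_one ha0.le ha1 (by norm_num : 1 ≤ 4)
      have hp : 8 * D * L * a ≤ 8 * D * (K * L) * a := by
        have : L ≤ K * L := by nlinarith
        gcongr
      have hp0 : 0 < 8 * D * L * a := by positivity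
      rcases le_or_gt u 2 with h2 | h2
      · refine le_trans ?_ ((ff_lower hu0).1 h2)
        have : (8 * D * L * a)^2 ≤ u^2 := by gcongr; linarith
        have h3 : 2 * D * L * a^4 ≤ 2 * D * L * a^2 := by gcongr
        have h4 : D * L * a^2 ≤ (D * L) * (D * L) * a^2 := by
          have : D * L ≤ (D * L) * (D * L) := by nlinarith [mul_pos (by linarith : 0 < D) (by linarith : 0 < L), (by nlinarith : 1 ≤ D * L)]
          gcongr
        nlinarith
      · refine le_trans ?_ ((ff_lower hu0).2 h2)
        have h3 : 2 * D * L * a^4 ≤ 2 * D * L * a := by gcongr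
        linarith
    have h1 : u / L * (2 * D * L * a^4) / 2 ≤ u / L * ff u / 2 := by gcongr
    have h2 : u / L * (2 * D * L * a^4) / 2 = D * (a^4 * u) := by
      have : L ≠ 0 := by linarith
      field_simp
    have h3 : 0 ≤ 8 * D^2 * (K * L * a^5) := by positivity
    linarith

noncomputable def TT (X y : ℝ) : Finset (ℕ × ℕ) :=
  ((Finset.Ioc ⌊y⌋₊ ⌊X / y⌋₊) ×ˢ (Finset.Ioc ⌊y⌋₊ ⌊X / y⌋₊)).filter
    (fun pq => pq.1.Prime ∧ pq.2.Prime ∧ (pq.1 : ℝ) * pq.2 ≤ X)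

lemma mem_TT {X y : ℝ} (hy : 0 < y) (pq : ℕ × ℕ) :
    pq ∈ TT X y ↔ pq.1.Prime ∧ pq.2.Prime ∧ y < pq.1 ∧ y < pq.2 ∧ (pq.1 : ℝ) * pq.2 ≤ X := by
  unfold TT
  rw [Finset.mem_filter, Finset.mem_product, Finset.mem_Ioc, Finset.mem_Ioc, Nat.floor_lt hy.le, Nat.floor_lt hy.le]
  constructor
  · rintro ⟨⟨⟨h1, h2⟩, h3, h4⟩, h5, h6, h7⟩
    exact ⟨h5, h6, h1, h3, h7⟩
  · rintro ⟨h5, h6, h1, h3, h7⟩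
    have p0 : (0:ℝ) < pq.1 := by linarith
    have q0 : (0:ℝ) < pq.2 := by linarith
    refine ⟨⟨⟨h1, Nat.le_floor ?_⟩, h3, Nat.le_floor ?_⟩, h5, h6, h7⟩
    · rw [le_div_iff₀ hy]; nlinarith
    · rw [le_div_iff₀ hy]; nlinarith

lemma SS_eq {X y : ℝ} (hy : 0 < y) :
    SS X y = ∑ pq ∈ TT X y, Real.log pq.1 * Real.log pq.2 := by
  unfold SS TT
  rw [Finset.sum_filter, Finset.sum_product]
  refine Finset.sum_congr rfl fun p hp => ?_
  rw [Finset.mem_Ioc] at hp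
  have hp1 : y < p := (Nat.floor_lt hy.le).1 hp.1
  have hp0 : (0:ℝ) < p := by linarith
  have hzpos : 0 < ⌊X / y⌋₊ := by omega
  have hz : 0 ≤ X / y := by
    by_contra hneg
    rw [Nat.floor_of_nonpos (by linarith)] at hzpos
    omega
  have hp2 : (p:ℝ) ≤ X / y := (Nat.le_floor_iff hz).1 hp.2
  have hXp : y ≤ X / p := by
    rw [le_div_iff₀ hp0]; rw [le_div_iff₀ hy] at hp2; linarith
  have hXp2 : X / p ≤ X / y := by
    rw [le_div_iff₀ hy] at hp2
    have : 0 ≤ X := by nlinarith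
    gcongr
  have hθ : Chebyshev.theta (X/p) - Chebyshev.theta y = ∑ q ∈ Finset.Ioc ⌊y⌋₊ ⌊X / p⌋₊, lgp q := by
    rw [theta_eq_lgp, theta_eq_lgp]
    have hsub : Finset.Icc 0 ⌊y⌋₊ ⊆ Finset.Icc 0 ⌊X/p⌋₊ := Finset.Icc_subset_Icc_right (Nat.floor_mono hXp)
    rw [← Finset.sum_sdiff hsub, add_sub_cancel_right]
    congr 1
    ext q
    simp only [Finset.mem_sdiff, Finset.mem_Icc, Finset.mem_Ioc]
    omega
  rw [hθ, mul_comm, Finset.mul_sum]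
  have hsub2 : Finset.Ioc ⌊y⌋₊ ⌊X / p⌋₊ ⊆ Finset.Ioc ⌊y⌋₊ ⌊X / y⌋₊ := Finset.Ioc_subset_Ioc_right (Nat.floor_mono hXp2)
  rw [← Finset.sum_subset hsub2]
  · refine Finset.sum_congr rfl fun q hq => ?_
    rw [Finset.mem_Ioc] at hq
    have hq2 : (q:ℝ) ≤ X / p := (Nat.le_floor_iff (by linarith)).1 hq.2
    have hq3 : (p:ℝ) * q ≤ X := by rw [le_div_iff₀ hp0] at hq2; linarith
    unfold lgp
    by_cases a : p.Prime <;> by_cases b : q.Prime <;> simp [a, b, hq3]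
  · intro q hq hq'
    have : ¬ ((p:ℝ) * q ≤ X) := by
      intro hle
      apply hq'
      rw [Finset.mem_Ioc] at hq ⊢
      refine ⟨hq.1, Nat.le_floor ?_⟩
      rw [le_div_iff₀ hp0]; linarith
    simp [this]

lemma choose_a {N m lo hi err : ℝ} (hm : 0 ≤ m) (hlh : lo ≤ hi) (herr : 0 ≤ err)
    (h1 : lo * m - err ≤ N) (h2 : N ≤ hi * m + err) : ∃ a ∈ Set.Icc lo hi, |N - a * m| ≤ err := by
  rcases lt_or_ge N (lo * m) with h | h
  · exact ⟨lo, ⟨le_rfl, hlh⟩, by rw [abs_le]; constructor <;> linarith⟩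
  rcases lt_or_ge (hi * m) N with h' | h'
  · exact ⟨hi, ⟨hlh, le_rfl⟩, by rw [abs_le]; constructor <;> linarith⟩
  rcases eq_or_lt_of_le hm with h0 | h0
  · exact ⟨lo, ⟨le_rfl, hlh⟩, by obtain rfl : m = 0 := h0.symm; rw [abs_le]; constructor <;> linarith⟩
  · refine ⟨N / m, ⟨?_, ?_⟩, ?_⟩
    · rwa [le_div_iff₀ h0]
    · rwa [div_le_iff₀ h0]
    · rw [div_mul_cancel₀ _ h0.ne', sub_self, abs_zero]; exact herr

/-- The count bounds in terms of the weighted sums. -/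
lemma count_bounds {x c : ℝ} (hx : 1 < x) (hc : 0 < c) :
    SS x (x^c) ≤ (TT x (x^c)).card * ((Real.log x)^2 / 4) ∧
    (c * Real.log x ^2 / 2) * (((TT x (x^c)).card : ℝ) - (TT (x^(c+1/2)) (x^c)).card) ≤
      SS x (x^c) - SS (x^(c+1/2)) (x^c) ∧
    c^2 * Real.log x ^ 2 * (TT (x^(c+1/2)) (x^c)).card ≤ SS (x^(c+1/2)) (x^c) ∨ x < x^(c+1/2) := by
  have hx0 : 0 < x := by linarith
  by_cases hlt : x < x^(c+1/2)
  · exact Or.inr hlt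
  left
  have hy : 0 < x ^ c := by positivity
  set L := Real.log x with hL
  have hL0 : 0 < L := Real.log_pos hx
  have hlogc : ∀ {p : ℕ}, x^c < p → c * L ≤ Real.log p := by
    intro p hp
    rw [hL, ← Real.log_rpow hx0]
    exact Real.log_le_log hy hp.le
  have hsub : TT (x^(c+1/2)) (x^c) ⊆ TT x (x^c) := by
    intro pq h
    rw [mem_TT hy] at h ⊢
    exact ⟨h.1, h.2.1, h.2.2.1, h.2.2.2.1, h.2.2.2.2.trans (not_lt.1 hlt)⟩
  rw [SS_eq hy, SS_eq hy]
  refine ⟨?_, ?_, ?_⟩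
  · rw [← nsmul_eq_mul]
    refine Finset.sum_le_card_nsmul _ _ _ fun pq h => ?_
    rw [mem_TT hy] at h
    obtain ⟨h1, h2, h3, h4, h5⟩ := h
    have p0 : (0:ℝ) < pq.1 := by linarith
    have q0 : (0:ℝ) < pq.2 := by linarith
    have a1 := hlogc h3
    have a2 := hlogc h4
    have h6 : Real.log pq.1 + Real.log pq.2 ≤ L := by
      rw [← Real.log_mul p0.ne' q0.ne']
      exact Real.log_le_log (by positivity) h5
    have : 0 < c * L := by positivity
    nlinarith [sq_nonneg (Real.log pq.1 - Real.log pq.2)]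
  · rw [← Finset.sum_sdiff hsub, add_sub_cancel_right, ← Nat.cast_sub (Finset.card_le_card hsub),
      ← Finset.card_sdiff_of_subset hsub, mul_comm, ← nsmul_eq_mul]
    refine Finset.card_nsmul_le_sum _ _ _ fun pq h => ?_
    rw [Finset.mem_sdiff, mem_TT hy, mem_TT hy] at h
    obtain ⟨⟨h1, h2, h3, h4, h5⟩, h'⟩ := h
    have h6 : x^(c+1/2) < (pq.1:ℝ) * pq.2 := by
      by_contra hh
      exact h' ⟨h1, h2, h3, h4, not_lt.1 hh⟩
    have p0 : (0:ℝ) < pq.1 := by linarith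
    have q0 : (0:ℝ) < pq.2 := by linarith
    have a1 := hlogc h3
    have a2 := hlogc h4
    have h7 : (c+1/2) * L ≤ Real.log pq.1 + Real.log pq.2 := by
      rw [← Real.log_mul p0.ne' q0.ne', hL, ← Real.log_rpow hx0]
      exact Real.log_le_log (by positivity) h6.le
    have : 0 < c * L := by positivity
    nlinarith [mul_nonneg (sub_nonneg.2 a1) (sub_nonneg.2 a2)]
  · rw [mul_comm, ← nsmul_eq_mul]
    refine Finset.card_nsmul_le_sum _ _ _ fun pq h => ?_
    rw [mem_TT hy] at h
    have a1 := hlogc h.2.2.1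
    have a2 := hlogc h.2.2.2.1
    have : 0 < c * L := by positivity
    nlinarith

lemma NMAX_eq {r x c : ℝ} (hr : 1 < r) (hx : 1 < x) (hrc : 1 / 2 - Real.log r / (2 * Real.log x) < c) :
    NMAX r c x = (TT x (x^c)).card := by
  have hx0 : 0 < x := by linarith
  have hy : 0 < x ^ c := by positivity
  have hL0 : 0 < Real.log x := Real.log_pos hx
  unfold NMAX
  refine Nat.subtype_card _ fun pq => ?_
  rw [mem_TT hy]
  constructor
  · rintro ⟨h1, h2, h3, h4, h5⟩
    have p0 : (0:ℝ) < pq.1 := by linarith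
    have q0 : (0:ℝ) < pq.2 := by linarith
    have e : x ^ (1 - c) = x / x ^ c := by rw [Real.rpow_sub hx0, Real.rpow_one]
    refine ⟨h1, h2, h3, ?_, h4, ?_, ?_, h5⟩
    · rw [e, le_div_iff₀ hy]; nlinarith
    · rw [e, le_div_iff₀ hy]; nlinarith
    · have h6 : x / r < x ^ c * x ^ c := by
        rw [← Real.log_lt_log_iff (by positivity) (by positivity), Real.log_div (by positivity) (by positivity),
          Real.log_mul hy.ne' hy.ne', Real.log_rpow hx0]
        have h7 : 1/2 * Real.log x - Real.log r / 2 < c * Real.log x := by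
          calc _ = (1 / 2 - Real.log r / (2 * Real.log x)) * Real.log x := by field_simp
            _ < _ := by gcongr
        linarith
      nlinarith
  · rintro ⟨h1, h2, h3, h4, h5, h6, h7, h8⟩
    exact ⟨h1, h2, h3, h5, h8⟩

set_option maxHeartbeats 1000000 in
lemma main_bounds {B : ℝ} (hB : 1 ≤ B)
    (hθ : ∀ t : ℝ, 1 ≤ t → |Chebyshev.theta t - t| ≤ B * t ^ (3/5:ℝ)) {x c : ℝ} (hx : 1 < x)
    (hxc : 2657 ≤ x ^ c) (hc : c ≤ 1/2) :
    let m := 4 * x / (Real.log x)^2 * ff ((1 - 2 * c) * Real.log x)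
    let err := (8 * (4*B^2)^2 + 2 * (4 * B^2)) * c⁻¹ * x ^ (1 - c/2)
    0 < c ∧ 0 ≤ m ∧ 0 ≤ err ∧ 1 / (4 * (1-c)^2) * m - err ≤ (TT x (x^c)).card ∧
      (TT x (x^c)).card ≤ 1 / (4 * c^2) * m + err := by
  intro m err
  have hx0 : 0 < x := by linarith
  set y := x ^ c with hyd
  have hy : 0 < y := by positivity
  have hy1 : 1 ≤ y := by linarith
  set L := Real.log x with hL
  have hL0 : 0 < L := Real.log_pos hx
  have hlogy : Real.log y = c * L := by rw [hyd, Real.log_rpow hx0]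
  have hK : 1 ≤ c * L := by
    rw [← hlogy, Real.le_log_iff_exp_le hy]
    linarith [Real.exp_one_lt_three]
  have hc0 : 0 < c := by
    by_contra h
    nlinarith
  have hL1 : 1 ≤ L := by nlinarith
  set u := (1 - 2 * c) * L with hu
  have hu0 : 0 ≤ u := mul_nonneg (by linarith) hL0.le
  have huL : u ≤ L := by nlinarith
  have hf := ff_nonneg hu0
  set D := 4 * B^2 with hD
  have hD1 : 1 ≤ D := by nlinarith
  set x' := x ^ (c + 1/2) with hx'd
  have hx'0 : 0 < x' := by positivity
  have hx'x : x' ≤ x := by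
    calc x' ≤ x ^ (1:ℝ) := Real.rpow_le_rpow_of_exponent_le hx.le (by linarith)
      _ = x := Real.rpow_one x
  have hy2 : y ^ 2 = x ^ (2 * c) := by
    rw [hyd, ← Real.rpow_natCast, ← Real.rpow_mul hx0.le]; congr 1; push_cast; ring
  have hyx' : y ^ 2 ≤ x' := by
    rw [hy2]; exact Real.rpow_le_rpow_of_exponent_le hx.le (by linarith)
  have l1 : Real.log (x / y^2) = u := by
    rw [Real.log_div hx0.ne' (by positivity), hy2, Real.log_rpow hx0, hu]; ring
  have l2 : Real.log (x' / y^2) = u / 2 := by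
    rw [Real.log_div hx'0.ne' (by positivity), hy2, hx'd, Real.log_rpow hx0, Real.log_rpow hx0, hu]; ring
  have s1 := SS_bound hB hθ hy1 (hyx'.trans hx'x)
  have s2 := SS_bound hB hθ hy1 hyx'
  rw [l1, ← hD] at s1
  rw [l2, ← hD] at s2
  set E := D * (x * y ^ (-(2/5):ℝ) * u + x ^ (3/5:ℝ) * (1 + u)) with hE
  set A := x * ff u with hA
  have hA0 : 0 ≤ A := by positivity
  set S := SS x y
  set S' := SS x' y
  have s2' : D * (x' * y ^ (-(2/5):ℝ) * (u/2) + x' ^ (3/5:ℝ) * (1 + u/2)) ≤ E := by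
    rw [hE]
    have : u / 2 ≤ u := by linarith
    gcongr
  have hA' : x' * ff (u/2) ≤ A / 2 := by
    have h1 := ff_half u
    calc x' * ff (u/2) ≤ x * (ff u / 2) := by
          have := ff_nonneg (u := u/2) (by linarith)
          gcongr
      _ = A / 2 := by rw [hA]; ring
  have S'le : S' ≤ A / 2 + E := by linarith [(abs_le.1 s2).2]
  have Sle : S ≤ A + E := by linarith [(abs_le.1 s1).2]
  have Sge : A - E ≤ S := by linarith [(abs_le.1 s1).1]
  obtain ⟨c1, c2, c3⟩ | hbad := count_bounds hx hc0
  swap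
  · exact absurd hbad (not_lt.2 hx'x)
  set N : ℝ := ((TT x y).card : ℝ)
  set N' : ℝ := ((TT x' y).card : ℝ)
  set P := x ^ (1 - c/2) with hP
  have hP0 : 0 < P := by positivity
  have hPy : P = x * y ^ (-(1/2):ℝ) := by
    rw [hP, hyd, ← Real.rpow_mul hx0.le, Real.rpow_sub hx0, Real.rpow_one, div_eq_mul_inv, ← Real.rpow_neg hx0.le]
    congr 2; ring
  have hR : E ≤ (1 - 2*c) * A / 2 + (8 * D^2 + 2 * D) * (c * L^2 * P) := by
    have k1 := key_ineq hD1 hK hL1 hu0 hy1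
    have k2 : u / L = 1 - 2 * c := by rw [hu]; field_simp
    rw [k2] at k1
    have k3 : x * (D * (y ^ (-(2/5):ℝ) * u)) ≤ x * ((1 - 2*c) * ff u / 2 + 8 * D^2 * (c * L * L * y ^ (-(1/2):ℝ))) := by
      gcongr
    have k4 : x ^ (3/5:ℝ) ≤ P := Real.rpow_le_rpow_of_exponent_le hx.le (by linarith)
    have k5 : x ^ (3/5:ℝ) * (1 + u) ≤ P * (2 * (c * L^2)) := by
      have : 1 + u ≤ 2 * (c * L^2) := by nlinarith
      gcongr
    have k6 : D * (x ^ (3/5:ℝ) * (1 + u)) ≤ D * (P * (2 * (c * L^2))) := by gcongr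
    rw [hE]
    calc _ = x * (D * (y ^ (-(2/5):ℝ) * u)) + D * (x ^ (3/5:ℝ) * (1 + u)) := by ring
      _ ≤ x * ((1 - 2*c) * ff u / 2 + 8 * D^2 * (c * L * L * y ^ (-(1/2):ℝ))) + D * (P * (2 * (c * L^2))) := by
          linarith
      _ = _ := by rw [hPy, hA]; ring
  set C := 8 * D^2 + 2 * D with hC
  have hC0 : 0 < C := by positivity
  have hm : m = 4 * A / L^2 := by
    change 4 * x / L^2 * ff u = 4 * A / L^2
    rw [hA]; ring
  have herr : err = C * c⁻¹ * P := rfl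
  refine ⟨hc0, by rw [hm]; positivity, by rw [herr]; positivity, ?_, ?_⟩
  · -- lower
    rw [hm, herr]
    have hc1 : 0 < 1 - c := by linarith
    have g1 : 1 / (1-c)^2 ≤ 4 - 2 * (1 - 2*c) := by
      rw [div_le_iff₀ (by positivity)]
      nlinarith [mul_nonneg (by linarith : 0 ≤ 1 - 2*c) (by nlinarith : 0 ≤ 1 + 2*c - 2*c^2)]
    have g2 : 1 / (1-c)^2 * A ≤ (4 - 2 * (1 - 2*c)) * A := by gcongr
    have g3 : 4 * c ≤ c⁻¹ := by
      rw [← one_div, le_div_iff₀ hc0]; nlinarith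
    have g4 : C * (4 * c) * P * L^2 ≤ C * c⁻¹ * P * L^2 := by gcongr
    have g5 : 1 / (4 * (1-c)^2) * (4 * A / L^2) - C * c⁻¹ * P = (1 / (1-c)^2 * A - C * c⁻¹ * P * L^2) / L^2 := by
      field_simp
    rw [g5, div_le_iff₀ (by positivity)]
    linarith
  · -- upper
    rw [hm, herr]
    have q1 : c^2 * L^2 * N ≤ A * (1 - (1 - 2*c)/2) + E := by
      have r1 : (2 * c) * ((c * L^2/2) * (N - N')) ≤ (2 * c) * (S - S') := by gcongr
      have r2 : (1 - 2*c) * S' ≤ (1 - 2*c) * (A/2 + E) := by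
        have : 0 ≤ 1 - 2*c := by linarith
        gcongr
      have r3 : 2 * c * S ≤ 2 * c * (A + E) := by gcongr
      linarith
    have q2 : c^2 * L^2 * N ≤ A + C * (c * L^2 * P) := by linarith
    have g5 : 1 / (4 * c^2) * (4 * A / L^2) + C * c⁻¹ * P = (A + C * (c * L^2 * P)) / (c^2 * L^2) := by
      field_simp
    rw [g5, le_div_iff₀ (by positivity)]
    linarith

end Helpers2

/-- Theorem 5.2(ii) of the paper (count of the maximal notion, triangle case, under RH);
the main term is independent of `r`. -/
theorem NMAX_asymptotics_triangle (hRH : RiemannHypothesis) :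
    ∃ C : ℝ, 0 < C ∧ ∀ r x c₁ : ℝ, 1 < r → 1 < x →
      (2657 : ℝ) ≤ x ^ c₁ →
      1 / 2 - Real.log r / (2 * Real.log x) < c₁ → c₁ ≤ 1 / 2 →
      ∃ atil ∈ Set.Icc (1 / (4 * (1 - c₁) ^ 2)) (1 / (4 * c₁ ^ 2)),
        |(NMAX r c₁ x : ℝ)
            - atil * (4 * x / (Real.log x) ^ 2)
              * ((1 - 2 * c₁) * Real.log x + x ^ (-(1 - 2 * c₁)) - 1)|
          ≤ C * c₁⁻¹ * x ^ (1 - c₁ / 2) := by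
  obtain ⟨B, hB, hθ⟩ := theta_bound hRH
  refine ⟨8 * (4*B^2)^2 + 2 * (4 * B^2), by positivity, fun r x c hr hx hxc hrc hc => ?_⟩
  obtain ⟨hc0, hm, herr, h1, h2⟩ := main_bounds hB hθ hx hxc hc
  have hx0 : 0 < x := by linarith
  have hlh : 1 / (4 * (1 - c)^2) ≤ 1 / (4 * c^2) := by
    have : c ≤ 1 - c := by linarith
    gcongr
  obtain ⟨a, ha, hle⟩ := choose_a hm hlh herr h1 h2
  refine ⟨a, ha, ?_⟩
  rw [NMAX_eq hr hx hrc]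
  have e : (1 - 2 * c) * Real.log x + x ^ (-(1 - 2 * c)) - 1 = ff ((1 - 2 * c) * Real.log x) := by
    rw [ff, Real.rpow_def_of_pos hx0]
    have : Real.log x * -(1 - 2 * c) = -((1 - 2 * c) * Real.log x) := by ring
    rw [this]; ring
  rw [e, mul_assoc]
  exact hle
end

section
/- For all real r > 1 and x > 1 one has N^{FIX}_{r,1}(x) ≤ N^{DM}_r(x), N^{DM}_r(x) ≤ 2·N^{ALG}_r(x), and N^{ALG}_r(x) ≤ N^{FIX}_{r²,1}(x), where N^{FIX}_{r,σ}(x) = #{(p,q) : p, q prime, √(x/r) < p ≤ √(r^σ·x), √(x/r) < q ≤ √(r^σ·x), p·q ≤ x}, N^{DM}_r(x) = #{(p,q) : p, q prime, p/r < q < r·p, x/r < p·q ≤ x}, and N^{ALG}_r(x) = #{(p,q) : p, q prime, √x/r < p ≤ √x, x/(r·p) < q ≤ x/p}. -/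
/-- Prime-pair count of the fixed-bound notion. -/
noncomputable def NFIX (r σ x : ℝ) : ℕ :=
  Nat.card {pq : ℕ × ℕ // pq.1.Prime ∧ pq.2.Prime ∧
    Real.sqrt (x / r) < (pq.1 : ℝ) ∧ (pq.1 : ℝ) ≤ Real.sqrt (r ^ σ * x) ∧
    Real.sqrt (x / r) < (pq.2 : ℝ) ∧ (pq.2 : ℝ) ≤ Real.sqrt (r ^ σ * x) ∧
    (pq.1 : ℝ) * (pq.2 : ℝ) ≤ x}

/-- Prime-pair count of the de Weger notion. -/
noncomputable def NDM (r x : ℝ) : ℕ :=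
  Nat.card {pq : ℕ × ℕ // pq.1.Prime ∧ pq.2.Prime ∧
    (pq.1 : ℝ) / r < (pq.2 : ℝ) ∧ (pq.2 : ℝ) < r * (pq.1 : ℝ) ∧
    x / r < (pq.1 : ℝ) * (pq.2 : ℝ) ∧ (pq.1 : ℝ) * (pq.2 : ℝ) ≤ x}

/-- Prime-pair count of the algorithmically inspired notion. -/
noncomputable def NALG (r x : ℝ) : ℕ :=
  Nat.card {pq : ℕ × ℕ // pq.1.Prime ∧ pq.2.Prime ∧
    Real.sqrt x / r < (pq.1 : ℝ) ∧ (pq.1 : ℝ) ≤ Real.sqrt x ∧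
    x / (r * (pq.1 : ℝ)) < (pq.2 : ℝ) ∧ (pq.2 : ℝ) ≤ x / (pq.1 : ℝ)}

theorem encl_finite (x : ℝ) (P : ℕ × ℕ → Prop)
    (h : ∀ pq, P pq → pq.1.Prime ∧ pq.2.Prime ∧ (pq.1 : ℝ) * (pq.2 : ℝ) ≤ x) :
    {pq | P pq}.Finite := by
  apply ((Set.finite_Iic ⌊x⌋₊).prod (Set.finite_Iic ⌊x⌋₊)).subset
  rintro ⟨p, q⟩ hpq
  obtain ⟨hp, hq, hx⟩ := h _ hpq
  have hp1 : (1 : ℝ) ≤ p := by exact_mod_cast hp.one_le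
  have hq1 : (1 : ℝ) ≤ q := by exact_mod_cast hq.one_le
  simp only at hx
  refine ⟨?_, ?_⟩
  · exact Nat.le_floor (by nlinarith)
  · exact Nat.le_floor (by nlinarith)

theorem alg_mem (r x : ℝ) (hr : 1 < r) (hx : 1 < x) (p q : ℝ) (hp : 0 < p) (hq : 0 < q)
    (hpq : p ≤ q) (h2 : q < r * p) (h3 : x / r < p * q) (h4 : p * q ≤ x) :
    Real.sqrt x / r < p ∧ p ≤ Real.sqrt x ∧ x / (r * p) < q ∧ q ≤ x / p := by
  have hr0 : 0 < r := by linarith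
  rw [div_lt_iff₀ hr0] at h3
  refine ⟨?_, ?_, ?_, ?_⟩
  · rw [div_lt_iff₀ hr0, Real.sqrt_lt' (by positivity)]
    have := mul_lt_mul_of_pos_left h2 (mul_pos hp hr0)
    nlinarith
  · apply Real.le_sqrt_of_sq_le
    nlinarith
  · rw [div_lt_iff₀ (by positivity)]; linarith
  · rw [le_div_iff₀ hp]; linarith

theorem fix_mem (r x : ℝ) (hr : 1 < r) (hx : 1 < x) (p q : ℝ) (hp : 0 < p)
    (h1 : Real.sqrt x / r < p) (h2 : p ≤ Real.sqrt x) (h3 : x / (r * p) < q) (h4 : q ≤ x / p) :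
    Real.sqrt (x / r ^ 2) < p ∧ p ≤ Real.sqrt ((r ^ 2) ^ (1 : ℝ) * x) ∧
    Real.sqrt (x / r ^ 2) < q ∧ q ≤ Real.sqrt ((r ^ 2) ^ (1 : ℝ) * x) ∧ p * q ≤ x := by
  have hr0 : 0 < r := by linarith
  have hx0 : 0 < x := by linarith
  rw [Real.rpow_one, Real.sqrt_div hx0.le, Real.sqrt_mul (by positivity), Real.sqrt_sq hr0.le]
  have hs : 0 < Real.sqrt x := Real.sqrt_pos.2 hx0
  have hss : Real.sqrt x * Real.sqrt x = x := Real.mul_self_sqrt hx0.le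
  generalize Real.sqrt x = s at *
  subst hss
  refine ⟨h1, by nlinarith, lt_of_le_of_lt ?_ h3, h4.trans ?_, ?_⟩
  · rw [div_le_div_iff₀ hr0 (by positivity)]
    have := mul_le_mul_of_nonneg_left h2 (mul_pos hs hr0).le
    nlinarith
  · rw [div_lt_iff₀ hr0] at h1
    rw [div_le_iff₀ hp]
    nlinarith
  · rw [le_div_iff₀ hp] at h4; linarith

/-- Lemma 6.2 of the paper: enclosing the notions by each other. -/
theorem notions_enclose (r x : ℝ) (hr : 1 < r) (hx : 1 < x) :
    NFIX r 1 x ≤ NDM r x ∧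
    NDM r x ≤ 2 * NALG r x ∧
    NALG r x ≤ NFIX (r ^ 2) 1 x := by
  have hr0 : 0 < r := by linarith
  have hx0 : 0 < x := by linarith
  have pos : ∀ p : ℕ, p.Prime → (0 : ℝ) < p := fun p hp => by exact_mod_cast hp.pos
  refine ⟨?_, ?_, ?_⟩
  · refine Set.ncard_le_ncard (s := {pq : ℕ × ℕ | _}) (t := {pq : ℕ × ℕ | _}) ?_
      (encl_finite x _ fun pq h => ⟨h.1, h.2.1, h.2.2.2.2.2⟩)
    rintro ⟨p, q⟩ ⟨hp, hq, h1, -, h2, -, h3⟩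
    have hp0 := pos p hp
    have hq0 := pos q hq
    simp only at h1 h2 h3 hp hq
    have h12 := mul_lt_mul'' h1 h2 (Real.sqrt_nonneg _) (Real.sqrt_nonneg _)
    rw [Real.mul_self_sqrt (by positivity)] at h12
    rw [Real.sqrt_lt' hp0, div_lt_iff₀ hr0] at h1
    rw [Real.sqrt_lt' hq0, div_lt_iff₀ hr0] at h2
    refine ⟨hp, hq, ?_, ?_, h12, h3⟩
    · simp only
      rw [div_lt_iff₀ hr0]
      exact lt_of_mul_lt_mul_left (by nlinarith : (q : ℝ) * p < q * (q * r)) hq0.le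
    · exact lt_of_mul_lt_mul_left (by nlinarith : (p : ℝ) * q < p * (r * p)) hp0.le
  · let A : Set (ℕ × ℕ) := {pq : ℕ × ℕ | pq.1.Prime ∧ pq.2.Prime ∧
      Real.sqrt x / r < (pq.1 : ℝ) ∧ (pq.1 : ℝ) ≤ Real.sqrt x ∧
      x / (r * (pq.1 : ℝ)) < (pq.2 : ℝ) ∧ (pq.2 : ℝ) ≤ x / (pq.1 : ℝ)}
    have hA : A.Finite := encl_finite x _ fun pq h => ⟨h.1, h.2.1, by
      have := h.2.2.2.2.2
      rw [le_div_iff₀ (pos _ h.1)] at this; linarith⟩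
    have e : NALG r x = A.ncard := rfl
    have key : NDM r x ≤ (A ∪ Prod.swap '' A).ncard := by
      refine Set.ncard_le_ncard (s := {pq : ℕ × ℕ | _}) ?_ (hA.union (hA.image _))
      rintro ⟨p, q⟩ ⟨hp, hq, h1, h2, h3, h4⟩
      have hp0 := pos p hp
      have hq0 := pos q hq
      simp only at h1 h2 h3 h4 hp hq
      rcases le_total (p : ℝ) q with h | h
      · exact Or.inl ⟨hp, hq, alg_mem r x hr hx p q hp0 hq0 h h2 h3 h4⟩
      · refine Or.inr ⟨(q, p), ⟨hq, hp, alg_mem r x hr hx q p hq0 hp0 h ?_ ?_ ?_⟩, rfl⟩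
        · rw [div_lt_iff₀ hr0] at h1; linarith
        · linarith
        · linarith
    have := Set.ncard_union_le A (Prod.swap '' A)
    have := Set.ncard_image_le (f := Prod.swap) hA
    omega
  · refine Set.ncard_le_ncard (s := {pq : ℕ × ℕ | _}) (t := {pq : ℕ × ℕ | _}) ?_
      (encl_finite x _ fun pq h => ⟨h.1, h.2.1, h.2.2.2.2.2.2⟩)
    rintro ⟨p, q⟩ ⟨hp, hq, h1, h2, h3, h4⟩
    exact ⟨hp, hq, fix_mem r x hr hx p q (pos p hp) h1 h2 h3 h4⟩
end

section
/- For all real r > 1 and x > 1 one has N^{FIX}_{r,1}(x) ≤ N^{DM}_r(x) ≤ N^{FIX}_{r²,1/2}(x), where N^{FIX}_{r,σ}(x) = #{(p,q) : p, q prime, √(x/r) < p ≤ √(r^σ·x), √(x/r) < q ≤ √(r^σ·x), p·q ≤ x} and N^{DM}_r(x) = #{(p,q) : p, q prime, p/r < q < r·p, x/r < p·q ≤ x}. -/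
theorem finite_aux (x : ℝ) (P : ℕ × ℕ → Prop)
    (h : ∀ a, P a → a.1.Prime ∧ a.2.Prime ∧ (a.1 : ℝ) * (a.2 : ℝ) ≤ x) :
    {a : ℕ × ℕ | P a}.Finite := by
  apply (Set.finite_Iic ((⌊x⌋₊, ⌊x⌋₊) : ℕ × ℕ)).subset
  intro a ha
  obtain ⟨h1, h2, h3⟩ := h a ha
  have e1 : (1 : ℝ) ≤ a.1 := by exact_mod_cast h1.one_le
  have e2 : (1 : ℝ) ≤ a.2 := by exact_mod_cast h2.one_le
  exact ⟨Nat.le_floor (by nlinarith), Nat.le_floor (by nlinarith)⟩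

theorem card_aux (x : ℝ) (P Q : ℕ × ℕ → Prop)
    (h : ∀ a, Q a → a.1.Prime ∧ a.2.Prime ∧ (a.1 : ℝ) * (a.2 : ℝ) ≤ x)
    (hPQ : ∀ a, P a → Q a) : Nat.card {a // P a} ≤ Nat.card {a // Q a} :=
  Nat.card_mono (finite_aux x Q h) hPQ

/-- Lemma 6.3 of the paper: a tighter enclosure of the de Weger notion by fixed-bound notions. -/
theorem NDM_enclosed_by_NFIX (r x : ℝ) (hr : 1 < r) (hx : 1 < x) :
    NFIX r 1 x ≤ NDM r x ∧ NDM r x ≤ NFIX (r ^ 2) (1 / 2) x := by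
  have hr0 : 0 < r := by linarith
  have hx0 : 0 < x := by linarith
  constructor
  · apply card_aux x
    · rintro a ⟨h1, h2, -, -, -, h3⟩
      exact ⟨h1, h2, h3⟩
    · rintro ⟨p, q⟩ ⟨h1, h2, h3, h4, h5, h6, h7⟩
      dsimp only at *
      have hs : Real.sqrt (r ^ (1 : ℝ) * x) = r * Real.sqrt (x / r) := by
        rw [Real.rpow_one, show r * x = r ^ 2 * (x / r) by field_simp,
          Real.sqrt_mul (by positivity), Real.sqrt_sq hr0.le]
      have hsq : Real.sqrt (x / r) * Real.sqrt (x / r) = x / r :=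
        Real.mul_self_sqrt (by positivity)
      have hs0 : 0 ≤ Real.sqrt (x / r) := Real.sqrt_nonneg _
      rw [hs] at h4 h6
      refine ⟨h1, h2, ?_, ?_, ?_, h7⟩
      · rw [div_lt_iff₀ hr0]; nlinarith
      · nlinarith
      · rw [← hsq]; exact mul_lt_mul'' h3 h5 hs0 hs0
  · apply card_aux x
    · rintro a ⟨h1, h2, -, -, -, -, h3⟩
      exact ⟨h1, h2, h3⟩
    · rintro ⟨p, q⟩ ⟨h1, h2, h3, h4, h5, h6⟩
      dsimp only at *
      have e1 : (0 : ℝ) < p := by exact_mod_cast h1.pos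
      have e2 : (0 : ℝ) < q := by exact_mod_cast h2.pos
      have hs : (r ^ 2) ^ (1 / 2 : ℝ) = r := by
        rw [← Real.sqrt_eq_rpow, Real.sqrt_sq hr0.le]
      rw [hs]
      rw [div_lt_iff₀ hr0] at h3 h5
      have k1 : (p : ℝ) * p < q * r * p := mul_lt_mul_of_pos_right h3 e1
      have k2 : (q : ℝ) * q < r * p * q := mul_lt_mul_of_pos_right h4 e2
      have k3 : r * (p * q) ≤ r * x := mul_le_mul_of_nonneg_left h6 hr0.le
      have k4 : (p : ℝ) * q * r < p * p * r ^ 2 := by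
        have := mul_lt_mul_of_pos_right h4 (mul_pos e1 hr0)
        nlinarith
      have k5 : (p : ℝ) * q * r < q * q * r ^ 2 := by
        have := mul_lt_mul_of_pos_right h3 (mul_pos e2 hr0)
        nlinarith
      refine ⟨h1, h2, ?_, ?_, ?_, ?_, h6⟩
      · rw [Real.sqrt_lt' e1, div_lt_iff₀ (by positivity)]; nlinarith
      · apply Real.le_sqrt_of_sq_le; nlinarith
      · rw [Real.sqrt_lt' e2, div_lt_iff₀ (by positivity)]; nlinarith
      · apply Real.le_sqrt_of_sq_le; nlinarith
end
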